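/- arXiv:2102.00493 — 11 statements merged into one kernel-verified Lean document; each statement's English description precedes it below -/
import Mathlib

section
/- For every integer r ≥ 2, the set of real numbers α ∈ [0,1) that are not simply normal in base r is a Lebesgue null set; equivalently, almost every α ∈ [0,1) (with respect to Lebesgue measure) is simply normal in base r. -/
open MeasureTheory Filter Finset

/-- The `j`-th digit (after the radix point) of `α` in base `r`: `⌊r^j * α⌋ mod r`. -/
noncomputable def digit (r : ℕ) (α : ℝ) (j : ℕ) : ℤ := ⌊(r : ℝ) ^ j * α⌋ % r

/-- `digitCount r b n α` counts the indices `j` with `1 ≤ j ≤ n` and `digit r α j = b`. -/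
noncomputable def digitCount (r b n : ℕ) (α : ℝ) : ℕ :=
  ((Finset.Icc 1 n).filter (fun j => digit r α j = (b : ℤ))).card

/-- `α` is simply normal in base `r`. -/
def SimplyNormal (r : ℕ) (α : ℝ) : Prop :=
  ∀ b < r, Tendsto (fun n : ℕ => (digitCount r b n α : ℝ) / n) atTop (nhds (1 / r))

/-- `α` is normal in base `r`: `r^m * α` is simply normal in base `r^n`
for all `n ≥ 1` and all `m ≥ 0`. -/
def NormalBase (r : ℕ) (α : ℝ) : Prop :=
  ∀ n : ℕ, 1 ≤ n → ∀ m : ℕ, SimplyNormal (r ^ n) ((r : ℝ) ^ m * α)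

/-- Lebesgue measure on the unit interval. -/
noncomputable def unitMeas : Measure ℝ := volume.restrict (Set.Ico (0 : ℝ) 1)

instance unitMeas_prob : IsProbabilityMeasure unitMeas := by
  constructor
  simp [unitMeas]

/-- Periodic digit set. -/
def digSet (r b : ℕ) : Set ℝ := {y | ⌊(r : ℝ) * y⌋ % (r : ℤ) = (b : ℤ)}

lemma digSet_meas (r b : ℕ) : MeasurableSet (digSet r b) := by
  have h : Measurable (fun y : ℝ => ⌊(r : ℝ) * y⌋ % (r : ℤ)) :=
    (measurable_of_countable (fun z : ℤ => z % (r : ℤ))).comp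
      (Int.measurable_floor.comp (measurable_const_mul _))
  exact h (measurableSet_singleton (b : ℤ))

lemma digSet_per (r b : ℕ) (x : ℝ) : x + 1 ∈ digSet r b ↔ x ∈ digSet r b := by
  have : ⌊(r : ℝ) * (x + 1)⌋ = ⌊(r : ℝ) * x⌋ + r := by
    rw [mul_add, mul_one, Int.floor_add_natCast]
  simp [digSet, this]

lemma per_nat {S : Set ℝ} (hp : ∀ x, x + 1 ∈ S ↔ x ∈ S) (x : ℝ) (n : ℕ) :
    x + n ∈ S ↔ x ∈ S := by
  induction n with
  | zero => simp
  | succ n ih => rw [← ih, ← hp (x + n)]; push_cast; rw [add_assoc]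

lemma vol_real_eq {S : Set ℝ} (hS : MeasurableSet S) {a b : ℝ} (hab : a ≤ b) :
    volume.real (Set.Ico a b ∩ S) = ∫ x in a..b, S.indicator (fun _ => (1 : ℝ)) x := by
  rw [intervalIntegral.integral_of_le hab, ← integral_Ico_eq_integral_Ioc,
    integral_indicator hS, Measure.restrict_restrict hS]
  simp [Set.inter_comm, Measure.real]

lemma unit_real_eq {S : Set ℝ} (hS : MeasurableSet S) :
    unitMeas.real S = ∫ x in (0 : ℝ)..1, S.indicator (fun _ => (1 : ℝ)) x := by
  rw [← vol_real_eq hS zero_le_one, unitMeas, Measure.real, Measure.restrict_apply hS,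
    Set.inter_comm, Measure.real]

lemma ind_per {S : Set ℝ} (hp : ∀ x, x + 1 ∈ S ↔ x ∈ S) :
    Function.Periodic (S.indicator (fun _ => (1 : ℝ))) 1 := by
  intro x
  classical
  simp only [Set.indicator_apply, hp]

lemma ind_int {S : Set ℝ} (hS : MeasurableSet S) (a b : ℝ) :
    IntervalIntegrable (S.indicator (fun _ => (1 : ℝ))) volume a b := by
  rw [intervalIntegrable_iff, Set.uIoc]
  exact (integrable_const (1 : ℝ)).indicator hS

lemma unit_mul {S : Set ℝ} (hS : MeasurableSet S) (hp : ∀ x, x + 1 ∈ S ↔ x ∈ S)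
    (N : ℕ) (hN : N ≠ 0) : unitMeas.real ((fun x : ℝ => (N : ℝ) * x) ⁻¹' S) = unitMeas.real S := by
  have hN' : (N : ℝ) ≠ 0 := by exact_mod_cast hN
  rw [unit_real_eq (measurable_const_mul _ hS), unit_real_eq hS]
  have h1 := intervalIntegral.integral_comp_mul_left (a := 0) (b := 1)
    (S.indicator (fun _ => (1 : ℝ))) hN'
  have h2 := (ind_per hp).intervalIntegral_add_zsmul_eq N 0 (ind_int hS)
  simp only [zero_add, mul_zero, mul_one, zsmul_eq_mul, Int.cast_natCast, smul_eq_mul] at h1 h2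
  rw [h2] at h1
  rw [← mul_assoc, inv_mul_cancel₀ hN', one_mul] at h1
  exact h1

lemma unit_mul' {S : Set ℝ} (hS : MeasurableSet S) (hp : ∀ x, x + 1 ∈ S ↔ x ∈ S)
    (N : ℕ) (hN : N ≠ 0) : unitMeas ((fun x : ℝ => (N : ℝ) * x) ⁻¹' S) = unitMeas S :=
  (measureReal_eq_measureReal_iff).1 (unit_mul hS hp N hN)

lemma dig_inter (r b : ℕ) (hr : 2 ≤ r) (hb : b < r) :
    Set.Ico (0 : ℝ) 1 ∩ digSet r b = Set.Ico ((b : ℝ) / r) ((b + 1) / r) := by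
  have r0 : (0 : ℝ) < r := by positivity
  have hb' : (b : ℝ) + 1 ≤ r := by exact_mod_cast hb
  ext y
  simp only [Set.mem_inter_iff, Set.mem_Ico, digSet, Set.mem_ofPred_eq]
  rw [div_le_iff₀ r0, lt_div_iff₀ r0, mul_comm y]
  constructor
  · rintro ⟨⟨h0, h1⟩, h⟩
    have l0 : 0 ≤ ⌊(r : ℝ) * y⌋ := Int.floor_nonneg.2 (by positivity)
    have l1 : ⌊(r : ℝ) * y⌋ < (r : ℤ) := by
      rw [Int.floor_lt]; push_cast; nlinarith
    rw [Int.emod_eq_of_lt l0 l1, Int.floor_eq_iff] at h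
    exact_mod_cast h
  · rintro ⟨h0, h1⟩
    have hf : ⌊(r : ℝ) * y⌋ = (b : ℤ) := by
      rw [Int.floor_eq_iff]; push_cast; exact ⟨h0, h1⟩
    refine ⟨⟨?_, ?_⟩, ?_⟩
    · have : (0 : ℝ) ≤ b := by positivity
      by_contra! hc
      nlinarith
    · by_contra! hc
      nlinarith
    · rw [hf]; exact Int.emod_eq_of_lt (by positivity) (by exact_mod_cast hb)

lemma unit_dig (r b : ℕ) (hr : 2 ≤ r) (hb : b < r) : unitMeas.real (digSet r b) = 1 / r := by
  have r0 : (0 : ℝ) < r := by positivity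
  rw [unitMeas, Measure.real, Measure.restrict_apply (digSet_meas r b), Set.inter_comm,
    dig_inter r b hr hb, Real.volume_Ico, ENNReal.toReal_ofReal]
  · ring
  · rw [← sub_div]; simp

lemma unit_dig_inter (r b : ℕ) (hr : 2 ≤ r) (hb : b < r) (k : ℕ) :
    unitMeas.real (digSet r b ∩ (fun x : ℝ => ((r ^ (k + 1) : ℕ) : ℝ) * x) ⁻¹' digSet r b)
      = 1 / r * (1 / r) := by
  have r0 : (0 : ℝ) < r := by positivity
  have hrk : r ^ k ≠ 0 := pow_ne_zero _ (by omega)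
  set F := (fun x : ℝ => ((r ^ (k + 1) : ℕ) : ℝ) * x) ⁻¹' digSet r b with hF
  set G := (fun x : ℝ => ((r ^ k : ℕ) : ℝ) * x) ⁻¹' digSet r b with hG
  have mF : MeasurableSet F := measurable_const_mul _ (digSet_meas r b)
  have mG : MeasurableSet G := measurable_const_mul _ (digSet_meas r b)
  have pG : ∀ x, x + 1 ∈ G ↔ x ∈ G := by
    intro x
    simp only [hG, Set.mem_preimage, mul_add, mul_one]
    exact per_nat (digSet_per r b) _ _
  have hFG : ∀ x, F.indicator (fun _ => (1 : ℝ)) x = G.indicator (fun _ => (1 : ℝ)) (r * x) := by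
    intro x
    have : x ∈ F ↔ (r : ℝ) * x ∈ G := by
      simp only [hF, hG, Set.mem_preimage]
      rw [← mul_assoc]; push_cast; rw [pow_succ]
    classical
    simp only [Set.indicator_apply, this]
  rw [unitMeas, Measure.real, Measure.restrict_apply ((digSet_meas r b).inter mF), Set.inter_comm,
    ← Set.inter_assoc, dig_inter r b hr hb, ← Measure.real,
    vol_real_eq mF (by gcongr; linarith)]
  simp only [hFG]
  rw [intervalIntegral.integral_comp_mul_left _ r0.ne', mul_div_cancel₀ _ r0.ne',
    mul_div_cancel₀ _ r0.ne', (ind_per pG).intervalIntegral_add_eq b 0, zero_add,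
    ← unit_real_eq mG, unit_mul (digSet_meas r b) (digSet_per r b) _ hrk, unit_dig r b hr hb]
  simp

/-- The event that digit number `j + 1` equals `b`. -/
def digEv (r b j : ℕ) : Set ℝ := (fun x : ℝ => ((r ^ j : ℕ) : ℝ) * x) ⁻¹' digSet r b

lemma digEv_meas (r b j : ℕ) : MeasurableSet (digEv r b j) :=
  measurable_const_mul _ (digSet_meas r b)

lemma digEv_iff (r b j : ℕ) (x : ℝ) : x ∈ digEv r b j ↔ digit r x (j + 1) = b := by
  simp only [digEv, Set.mem_preimage, digSet, Set.mem_ofPred_eq, digit]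
  rw [← mul_assoc]; push_cast; rw [pow_succ']

lemma digEv_inter (r b : ℕ) (hr : 2 ≤ r) (hb : b < r) {i j : ℕ} (hij : i < j) :
    unitMeas.real (digEv r b i ∩ digEv r b j) = 1 / r * (1 / r) := by
  obtain ⟨k, rfl⟩ := Nat.exists_eq_add_of_lt hij
  rw [← unit_dig_inter r b hr hb k, ← unit_mul (S := digSet r b ∩ _) _ _ (r ^ i) (pow_ne_zero _ (by omega))]
  · congr 1
    ext x
    simp only [digEv, Set.mem_inter_iff, Set.mem_preimage]
    rw [← mul_assoc (((r ^ (k + 1) : ℕ) : ℝ))]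
    push_cast
    rw [← pow_add, show k + 1 + i = i + k + 1 by ring]
  · exact (digSet_meas r b).inter (measurable_const_mul _ (digSet_meas r b))
  · intro x
    simp only [Set.mem_inter_iff, Set.mem_preimage, mul_add, mul_one]
    rw [digSet_per, per_nat (digSet_per r b)]

lemma digEv_unit (r b : ℕ) (hr : 2 ≤ r) (hb : b < r) (i : ℕ) :
    unitMeas.real (digEv r b i) = 1 / r := by
  rw [digEv, unit_mul (digSet_meas r b) (digSet_per r b) _ (pow_ne_zero _ (by omega)),
    unit_dig r b hr hb]

/-- Indicator of the event. -/
noncomputable def digX (r b j : ℕ) : ℝ → ℝ := (digEv r b j).indicator (fun _ => 1)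

lemma digX_meas (r b j : ℕ) : Measurable (digX r b j) :=
  measurable_const.indicator (digEv_meas r b j)

lemma digX_indep_of (r b : ℕ) {i j : ℕ}
    (h : unitMeas.real (digEv r b i ∩ digEv r b j)
      = unitMeas.real (digEv r b i) * unitMeas.real (digEv r b j)) :
    ProbabilityTheory.IndepFun (digX r b i) (digX r b j) unitMeas := by
  have h' : unitMeas (digEv r b i ∩ digEv r b j)
      = unitMeas (digEv r b i) * unitMeas (digEv r b j) := by
    simp only [Measure.real] at h
    rw [← ENNReal.toReal_mul] at h
    exact (ENNReal.toReal_eq_toReal_iff' (measure_ne_top _ _)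
      (ENNReal.mul_ne_top (measure_ne_top _ _) (measure_ne_top _ _))).1 h
  have hs : ProbabilityTheory.IndepSet (digEv r b i) (digEv r b j) unitMeas :=
    (ProbabilityTheory.indepSet_iff_measure_inter_eq_mul (digEv_meas r b i)
      (digEv_meas r b j) unitMeas).2 h'
  have key : ∀ l, MeasurableSpace.comap (digX r b l) inferInstance
      ≤ MeasurableSpace.generateFrom {digEv r b l} := by
    intro l
    refine Measurable.comap_le ?_
    refine Measurable.indicator (m := MeasurableSpace.generateFrom {digEv r b l})
      measurable_const ?_
    exact MeasurableSpace.measurableSet_generateFrom rfl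
  rw [ProbabilityTheory.IndepFun_iff_Indep]
  exact ProbabilityTheory.indep_of_indep_of_le_left
    (ProbabilityTheory.indep_of_indep_of_le_right hs (key j)) (key i)

lemma digX_ident (r b : ℕ) (hr : 2 ≤ r) (i : ℕ) :
    ProbabilityTheory.IdentDistrib (digX r b i) (digX r b 0) unitMeas unitMeas := by
  refine ⟨(digX_meas r b i).aemeasurable, (digX_meas r b 0).aemeasurable, ?_⟩
  have hD : Measurable ((digSet r b).indicator (fun _ => (1 : ℝ))) :=
    measurable_const.indicator (digSet_meas r b)
  have key : ∀ l (s : Set ℝ), MeasurableSet s → unitMeas (digX r b l ⁻¹' s) =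
      unitMeas ((digSet r b).indicator (fun _ => (1 : ℝ)) ⁻¹' s) := by
    intro l s hs
    rw [← unit_mul' (hD hs) _ (r ^ l) (pow_ne_zero _ (by omega))]
    · rfl
    · intro x
      simp only [Set.mem_preimage]
      rw [ind_per (digSet_per r b) x]
  ext s hs
  rw [Measure.map_apply (digX_meas r b i) hs, Measure.map_apply (digX_meas r b 0) hs,
    key i s hs, key 0 s hs]

lemma digX_sum (r b n : ℕ) (x : ℝ) :
    ∑ i ∈ Finset.range n, digX r b i x = (digitCount r b n x : ℝ) := by
  have h : ∀ i, digX r b i x = if digit r x (i + 1) = (b : ℤ) then (1 : ℝ) else 0 := by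
    intro i
    classical
    simp only [digX, Set.indicator_apply, digEv_iff]
  simp only [h, digitCount, Finset.card_filter]
  push_cast
  rw [Finset.range_eq_Ico, Finset.sum_Ico_add' (fun j => if digit r x j = (b : ℤ) then (1 : ℝ) else 0)]
  rfl

lemma ae_dig (r b : ℕ) (hr : 2 ≤ r) (hb : b < r) :
    ∀ᵐ x ∂unitMeas, Tendsto (fun n : ℕ => (digitCount r b n x : ℝ) / n) atTop (nhds (1 / r)) := by
  have hint : Integrable (digX r b 0) unitMeas :=
    (integrable_const (1 : ℝ)).indicator (digEv_meas r b 0)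
  have hE : ∫ x, digX r b 0 x ∂unitMeas = 1 / r := by
    rw [digX, integral_indicator (digEv_meas r b 0)]
    simpa using digEv_unit r b hr hb 0
  have hpair : Pairwise (Function.onFun
      (fun f g => ProbabilityTheory.IndepFun f g unitMeas) (digX r b)) := by
    intro i j hij
    apply digX_indep_of
    rw [digEv_unit r b hr hb, digEv_unit r b hr hb]
    rcases lt_or_gt_of_ne hij with h | h
    · exact digEv_inter r b hr hb h
    · rw [Set.inter_comm]; exact digEv_inter r b hr hb h
  have := ProbabilityTheory.strong_law_ae_real (digX r b) hint hpair (digX_ident r b hr)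
  filter_upwards [this] with x hx
  rw [hE] at hx
  simpa only [digX_sum] using hx

/-- Almost every number in `Set.Ico 0 1` is simply normal in base `r`. -/
theorem almost_all_simply_normal (r : ℕ) (hr : 2 ≤ r) :
    volume {α : ℝ | α ∈ Set.Ico (0 : ℝ) 1 ∧ ¬ SimplyNormal r α} = 0 := by
  have h : ∀ᵐ x ∂unitMeas, SimplyNormal r x := by
    have := ae_all_iff.2 (fun b : Fin r => ae_dig r b hr b.2)
    filter_upwards [this] with x hx b hb
    exact hx ⟨b, hb⟩
  rw [unitMeas, ae_restrict_iff' measurableSet_Ico, ae_iff] at h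
  simpa [and_assoc] using h
end

section
/- For every integer r ≥ 2, almost every real number α ∈ [0,1) (with respect to Lebesgue measure) is normal in base r, i.e., the set of α ∈ [0,1) that are not normal in base r is a Lebesgue null set. -/
open MeasureTheory Filter Finset

/-- Lebesgue measure on the unit interval. -/
noncomputable def muI : Measure ℝ := volume.restrict (Set.Ico (0 : ℝ) 1)

instance muI_prob : IsProbabilityMeasure muI := ⟨by simp [muI]⟩

lemma piece_measurable (N : ℕ) (b : ℤ) : MeasurableSet {x : ℝ | ⌊(N : ℝ) * x⌋ = b} :=
  (Int.measurable_floor.comp (measurable_const_mul (N : ℝ))) (measurableSet_singleton b)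

lemma T_measurable (N : ℝ) : Measurable (fun x : ℝ => Int.fract (N * x)) :=
  measurable_fract.comp (measurable_const_mul N)

lemma piece (N : ℕ) (b : ℕ) (hb : b < N) (A : Set ℝ) (hA : MeasurableSet A) :
    muI ({x : ℝ | ⌊(N : ℝ) * x⌋ = (b : ℤ)} ∩ (fun x : ℝ => Int.fract ((N : ℝ) * x)) ⁻¹' A)
      = ENNReal.ofReal (1 / N) * muI A := by
  have hN : (0 : ℝ) < N := by exact_mod_cast (by omega : 0 < N)
  have hb1 : (b : ℝ) + 1 ≤ N := by exact_mod_cast hb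
  have hb0 : (0 : ℝ) ≤ b := by positivity
  have hm := (piece_measurable N b).inter (T_measurable N hA)
  have key : ({x : ℝ | ⌊(N : ℝ) * x⌋ = (b : ℤ)} ∩ (fun x : ℝ => Int.fract ((N : ℝ) * x)) ⁻¹' A)
      ∩ Set.Ico 0 1 = (fun x => (N : ℝ) * x) ⁻¹' ((fun x => x + (-(b : ℝ))) ⁻¹' (A ∩ Set.Ico 0 1)) := by
    ext x
    simp only [Set.mem_inter_iff, Set.mem_ofPred_eq, Set.mem_preimage, Set.mem_Ico]
    constructor
    · rintro ⟨⟨h1, h2⟩, h3, h4⟩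
      have : (N : ℝ) * x + -(b : ℝ) = Int.fract ((N : ℝ) * x) := by
        rw [Int.fract, h1]; push_cast; ring
      rw [this]
      exact ⟨h2, Int.fract_nonneg _, Int.fract_lt_one _⟩
    · rintro ⟨h2, h3, h4⟩
      have h1 : ⌊(N : ℝ) * x⌋ = (b : ℤ) := by
        rw [Int.floor_eq_iff]; push_cast; constructor <;> linarith
      have : (N : ℝ) * x + -(b : ℝ) = Int.fract ((N : ℝ) * x) := by
        rw [Int.fract, h1]; push_cast; ring
      rw [this] at h2
      refine ⟨⟨h1, h2⟩, ?_, ?_⟩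
      · by_contra h; push Not at h; nlinarith
      · by_contra h; push Not at h; nlinarith
  rw [muI, Measure.restrict_apply hm, Measure.restrict_apply hA, key,
    Real.volume_preimage_mul_left hN.ne', measure_preimage_add_right]
  congr 2
  rw [abs_of_pos (by positivity), one_div]

lemma T_preserving (N : ℕ) (hN : 0 < N) :
    MeasurePreserving (fun x : ℝ => Int.fract ((N : ℝ) * x)) muI muI := by
  refine ⟨T_measurable N, ?_⟩
  ext A hA
  have hNR : (0 : ℝ) < N := by exact_mod_cast hN
  rw [Measure.map_apply (T_measurable N) hA]
  have e : muI ((fun x : ℝ => Int.fract ((N : ℝ) * x)) ⁻¹' A) =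
      muI (⋃ b ∈ Finset.range N, ({x : ℝ | ⌊(N : ℝ) * x⌋ = (b : ℤ)} ∩
        (fun x : ℝ => Int.fract ((N : ℝ) * x)) ⁻¹' A)) := by
    apply measure_congr
    rw [Filter.eventuallyEq_set]
    have : ∀ᵐ x ∂muI, x ∈ Set.Ico (0 : ℝ) 1 := ae_restrict_mem measurableSet_Ico
    filter_upwards [this] with x hx
    simp only [Set.mem_iUnion, exists_prop, Set.mem_inter_iff, Set.mem_ofPred_eq, Finset.mem_range]
    constructor
    · intro h
      have h0 : 0 ≤ ⌊(N : ℝ) * x⌋ := Int.floor_nonneg.2 (mul_nonneg hNR.le hx.1)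
      have h1 : ⌊(N : ℝ) * x⌋ < N := by
        rw [Int.floor_lt]; push_cast; nlinarith [hx.2]
      exact ⟨⌊(N : ℝ) * x⌋.toNat, by omega, by omega, h⟩
    · rintro ⟨b, _, _, h⟩; exact h
  rw [e, measure_biUnion_finset]
  · rw [Finset.sum_congr rfl (fun b hb => piece N b (Finset.mem_range.1 hb) A hA)]
    rw [Finset.sum_const, Finset.card_range, nsmul_eq_mul, ← mul_assoc,
      ← ENNReal.ofReal_natCast, ← ENNReal.ofReal_mul hNR.le, mul_one_div_cancel hNR.ne']
    simp
  · intro i _ j _ hij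
    refine Set.disjoint_left.2 ?_
    rintro x ⟨h1, _⟩ ⟨h2, _⟩
    simp only [Set.mem_ofPred_eq] at h1 h2
    omega
  · intro b _
    exact (piece_measurable N b).inter (T_measurable N hA)

lemma fract_nat_mul_fract (k : ℕ) (y : ℝ) :
    Int.fract ((k : ℝ) * Int.fract y) = Int.fract ((k : ℝ) * y) := by
  rw [Int.fract_eq_fract]
  refine ⟨-(k * ⌊y⌋), ?_⟩
  rw [Int.fract]; push_cast; ring

lemma floor_mul_mod (R : ℕ) (hR : 0 < R) (y : ℝ) :
    ⌊(R : ℝ) * y⌋ % (R : ℤ) = ⌊(R : ℝ) * Int.fract y⌋ := by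
  have hRR : (0 : ℝ) < R := by exact_mod_cast hR
  have h : (R : ℝ) * y = (R : ℝ) * Int.fract y + ((R * ⌊y⌋ : ℤ) : ℝ) := by
    rw [Int.fract]; push_cast; ring
  rw [h, Int.floor_add_intCast, Int.add_mul_emod_self_left]
  apply Int.emod_eq_of_lt
  · exact Int.floor_nonneg.2 (mul_nonneg hRR.le (Int.fract_nonneg _))
  · rw [Int.floor_lt]; push_cast; nlinarith [Int.fract_lt_one y]

/-- The event that the `i+1`-st digit of `c * x` in base `R` is `b`. -/
def Ev (R c b i : ℕ) : Set ℝ :=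
  (fun x : ℝ => Int.fract (((c * R ^ i : ℕ) : ℝ) * x)) ⁻¹' {x : ℝ | ⌊(R : ℝ) * x⌋ = (b : ℤ)}

lemma Ev_meas (R c b i : ℕ) : MeasurableSet (Ev R c b i) :=
  T_measurable _ (piece_measurable R b)

lemma mem_Ev (R c b i : ℕ) (hR : 0 < R) (x : ℝ) :
    x ∈ Ev R c b i ↔ digit R ((c : ℝ) * x) (i + 1) = b := by
  have : (R : ℝ) ^ (i + 1) * (c * x) = R * (((c * R ^ i : ℕ) : ℝ) * x) := by push_cast; ring
  rw [digit, this, floor_mul_mod R hR]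
  rfl

lemma mu_piece (R b : ℕ) (hb : b < R) :
    muI {x : ℝ | ⌊(R : ℝ) * x⌋ = (b : ℤ)} = ENNReal.ofReal (1 / R) := by
  simpa using piece R b hb Set.univ MeasurableSet.univ

lemma mu_Ev (R c b i : ℕ) (hc : 0 < c) (hb : b < R) :
    muI (Ev R c b i) = ENNReal.ofReal (1 / R) := by
  have hR : 0 < R := by omega
  rw [Ev, (T_preserving (c * R ^ i) (by positivity)).measure_preimage
    (piece_measurable R b).nullMeasurableSet, mu_piece R b hb]

lemma mu_Ev_inter (R c b i k : ℕ) (hc : 0 < c) (hb : b < R) :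
    muI (Ev R c b i ∩ Ev R c b (i + k + 1)) = ENNReal.ofReal (1 / R) * ENNReal.ofReal (1 / R) := by
  have hR : 0 < R := by omega
  have e : Ev R c b i ∩ Ev R c b (i + k + 1) =
      (fun x : ℝ => Int.fract (((c * R ^ i : ℕ) : ℝ) * x)) ⁻¹'
        ({x : ℝ | ⌊(R : ℝ) * x⌋ = (b : ℤ)} ∩ (fun x : ℝ => Int.fract ((R : ℝ) * x)) ⁻¹'
          Ev R 1 b k) := by
    ext x
    simp only [Ev, Set.mem_inter_iff, Set.mem_preimage, Set.mem_ofPred_eq]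
    rw [fract_nat_mul_fract, ← mul_assoc, ← Nat.cast_mul, fract_nat_mul_fract, ← mul_assoc,
      ← Nat.cast_mul]
    have : 1 * R ^ k * R * (c * R ^ i) = c * R ^ (i + k + 1) := by ring
    rw [this]
  have hm := (piece_measurable R b).inter (T_measurable R (Ev_meas R 1 b k))
  rw [e, (T_preserving (c * R ^ i) (by positivity)).measure_preimage hm.nullMeasurableSet,
    piece R b hb _ (Ev_meas R 1 b k), mu_Ev R 1 b k one_pos hb]

lemma Ev_indep (R c b i j : ℕ) (hc : 0 < c) (hb : b < R) (hij : i ≠ j) :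
    ProbabilityTheory.IndepFun ((Ev R c b i).indicator (fun _ => (1 : ℝ)))
      ((Ev R c b j).indicator (fun _ => (1 : ℝ))) muI := by
  wlog h : i < j generalizing i j
  · exact (this j i hij.symm (by omega)).symm
  obtain ⟨k, rfl⟩ : ∃ k, j = i + k + 1 := ⟨j - i - 1, by omega⟩
  have hs : ProbabilityTheory.IndepSet (Ev R c b i) (Ev R c b (i + k + 1)) muI := by
    rw [ProbabilityTheory.indepSet_iff_measure_inter_eq_mul (Ev_meas _ _ _ _) (Ev_meas _ _ _ _) muI,
      mu_Ev_inter R c b i k hc hb, mu_Ev R c b _ hc hb, mu_Ev R c b _ hc hb]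
  rw [ProbabilityTheory.IndepSet_iff_Indep] at hs
  rw [ProbabilityTheory.IndepFun_iff_Indep]
  exact ProbabilityTheory.indep_of_indep_of_le_left
    (ProbabilityTheory.indep_of_indep_of_le_right hs
      (MeasurableSpace.comap_indicator_const_le_generateFrom_singleton _ _))
      (MeasurableSpace.comap_indicator_const_le_generateFrom_singleton _ _)

lemma Ev_ident (R c b i : ℕ) (hc : 0 < c) (hR : 0 < R) :
    ProbabilityTheory.IdentDistrib ((Ev R c b i).indicator (fun _ => (1 : ℝ)))
      ((Ev R c b 0).indicator (fun _ => (1 : ℝ))) muI muI := by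
  have hf : Measurable ({x : ℝ | ⌊(R : ℝ) * x⌋ = (b : ℤ)}.indicator (fun _ => (1 : ℝ))) :=
    measurable_const.indicator (piece_measurable R b)
  have hi := T_preserving (c * R ^ i) (by positivity)
  have h0 := T_preserving (c * R ^ 0) (by positivity)
  have h : ProbabilityTheory.IdentDistrib _ _ muI muI :=
    ⟨hi.measurable.aemeasurable, h0.measurable.aemeasurable, hi.map_eq.trans h0.map_eq.symm⟩
  exact h.comp hf

lemma simply_ae (R c b : ℕ) (hc : 0 < c) (hb : b < R) :
    ∀ᵐ x ∂muI, Tendsto (fun n : ℕ => (digitCount R b n ((c : ℝ) * x) : ℝ) / n) atTop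
      (nhds (1 / R)) := by
  have hR : 0 < R := by omega
  have := ProbabilityTheory.strong_law_ae_real
    (fun i => (Ev R c b i).indicator (fun _ => (1 : ℝ)))
    ((integrable_const (1 : ℝ)).indicator (Ev_meas R c b 0))
    (fun i j hij => Ev_indep R c b i j hc hb hij) (fun i => Ev_ident R c b i hc hR)
  filter_upwards [this] with x hx
  have hint : ∫ a, (Ev R c b 0).indicator (fun _ => (1 : ℝ)) a ∂muI = 1 / R := by
    rw [integral_indicator_const _ (Ev_meas R c b 0), measureReal_def, mu_Ev R c b 0 hc hb,
      ENNReal.toReal_ofReal (by positivity)]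
    simp
  rw [hint] at hx
  refine hx.congr fun n => ?_
  congr 1
  rw [digitCount, Finset.card_filter, Finset.range_eq_Ico]
  push_cast
  rw [← Finset.Ico_add_one_right_eq_Icc]
  have hs := Finset.sum_Ico_add' (fun j => if digit R ((c : ℝ) * x) j = (b : ℤ) then (1 : ℝ) else 0)
    0 n 1
  rw [zero_add] at hs
  rw [← hs]
  refine Finset.sum_congr rfl fun i _ => ?_
  classical
  rw [Set.indicator_apply]
  simp only [zero_add, mem_Ev R c b i hR]

/-- Almost every number in `Set.Ico 0 1` is normal in base `r`. -/
theorem almost_all_normal (r : ℕ) (hr : 2 ≤ r) :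
    volume {α : ℝ | α ∈ Set.Ico (0 : ℝ) 1 ∧ ¬ NormalBase r α} = 0 := by
  have h : ∀ᵐ x ∂muI, NormalBase r x := by
    unfold NormalBase SimplyNormal
    rw [ae_all_iff]; intro n
    rw [ae_all_iff]; intro hn
    rw [ae_all_iff]; intro m
    rw [ae_all_iff]; intro b
    rw [ae_all_iff]; intro hb
    have := simply_ae (r ^ n) (r ^ m) b (by positivity) hb
    simpa using this
  rw [muI, ae_restrict_iff' measurableSet_Ico, ae_iff] at h
  simpa [and_assoc] using h
end

section
/- Almost every real number α ∈ [0,1) (with respect to Lebesgue measure) is absolutely normal, i.e., the set of α ∈ [0,1) that fail to be normal in some integer base r ≥ 2 is a Lebesgue null set. -/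
open MeasureTheory Filter Finset

theorem aux_scale {f : ℝ → ℝ} (hf : Function.Periodic f 1)
    (hi : ∀ a b, IntervalIntegrable f volume a b) (N : ℕ) (hN : 0 < N) (t : ℤ) :
    ∫ x in (t:ℝ)..(t + 1), f (N * x) = ∫ x in (0:ℝ)..1, f x := by
  have hN' : (N : ℝ) ≠ 0 := by positivity
  rw [intervalIntegral.integral_comp_mul_left f hN']
  have h := hf.intervalIntegral_add_zsmul_eq N (N * t) hi
  have h2 := hf.intervalIntegral_add_eq (N * t) 0
  rw [h2] at h
  simp only [zsmul_eq_mul, mul_one, zero_add, Int.cast_natCast] at h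
  rw [mul_add, mul_one, h, smul_eq_mul]
  field_simp

/-- basic digit set -/
def SS (R b : ℕ) : Set ℝ := {x | ⌊(R : ℝ) * x⌋ % (R : ℤ) = (b : ℤ)}

theorem SS_meas (R b : ℕ) : MeasurableSet (SS R b) := by
  have h : Measurable (fun x : ℝ => ⌊(R : ℝ) * x⌋) := by fun_prop
  exact h (t := {z : ℤ | z % (R : ℤ) = (b : ℤ)}) (MeasurableSet.of_discrete)

noncomputable def gg (R b : ℕ) : ℝ → ℝ := (SS R b).indicator (fun _ => (1 : ℝ))

theorem gg_meas (R b : ℕ) : Measurable (gg R b) := measurable_const.indicator (SS_meas R b)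

theorem gg_bd (R b : ℕ) (x : ℝ) : |gg R b x| ≤ 1 := by
  classical
  unfold gg
  rw [Set.indicator_apply]
  split_ifs <;> simp

theorem gg_per (R b : ℕ) : Function.Periodic (gg R b) 1 := by
  intro x
  have : x + 1 ∈ SS R b ↔ x ∈ SS R b := by
    have h : ⌊(R : ℝ) * (x + 1)⌋ = ⌊(R : ℝ) * x⌋ + (R : ℤ) := by
      rw [mul_add, mul_one]; exact Int.floor_add_natCast _ _
    simp [SS, h]
  classical
  simp only [gg, Set.indicator_apply, this]

theorem aux_int {f : ℝ → ℝ} (hm : Measurable f) (hb : ∀ x, |f x| ≤ 1) (a b : ℝ) :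
    IntervalIntegrable f volume a b := by
  refine (intervalIntegrable_const (c := (1:ℝ))).mono_fun hm.aestronglyMeasurable ?_
  exact Eventually.of_forall (fun x => by simpa using hb x)

theorem per_scale {f : ℝ → ℝ} (hf : Function.Periodic f 1) (N : ℕ) :
    Function.Periodic (fun x => f (N * x)) 1 := by
  intro x
  have := hf.nat_mul N (N * x)
  simpa [mul_add] using this

theorem aux_mul (R b : ℕ) (hb : b < R) (f : ℝ → ℝ) :
    ∫ x in (0:ℝ)..1, gg R b x * f x = ∫ x in ((b:ℝ) / R)..((b + 1) / R), f x := by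
  have hR : (0:ℝ) < R := by exact_mod_cast (by omega : 0 < R)
  have hb' : (b:ℝ) + 1 ≤ R := by exact_mod_cast hb
  have hle : (b:ℝ) / R ≤ (b + 1) / R := by gcongr; linarith
  rw [intervalIntegral.integral_of_le zero_le_one, intervalIntegral.integral_of_le hle,
    ← integral_Ico_eq_integral_Ioc, ← integral_Ico_eq_integral_Ioc,
    ← integral_indicator measurableSet_Ico, ← integral_indicator measurableSet_Ico]
  congr 1
  ext x
  have key : (x ∈ Set.Ico (0:ℝ) 1 ∧ x ∈ SS R b) ↔ x ∈ Set.Ico ((b:ℝ) / R) ((b + 1) / R) := by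
    have h1 : x ∈ Set.Ico ((b:ℝ) / R) ((b + 1) / R) ↔ ⌊(R:ℝ) * x⌋ = (b:ℤ) := by
      rw [Int.floor_eq_iff, Set.mem_Ico, div_le_iff₀ hR, lt_div_iff₀ hR, mul_comm x]
      simp
    rw [h1]
    constructor
    · rintro ⟨⟨h0, h2⟩, h3⟩
      have h4 : 0 ≤ ⌊(R:ℝ) * x⌋ := Int.floor_nonneg.2 (by positivity)
      have h5 : ⌊(R:ℝ) * x⌋ < (R:ℤ) := Int.floor_lt.2 (by push_cast; nlinarith)
      have h6 : ⌊(R:ℝ) * x⌋ % (R:ℤ) = b := h3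
      rwa [Int.emod_eq_of_lt h4 h5] at h6
    · intro h
      refine ⟨?_, ?_⟩
      · obtain ⟨h2, h3⟩ := h1.2 h
        exact ⟨le_trans (by positivity) h2, lt_of_lt_of_le h3 ((div_le_one hR).2 hb')⟩
      · change ⌊(R:ℝ) * x⌋ % (R:ℤ) = b
        rw [h]
        exact Int.emod_eq_of_lt (by positivity) (by exact_mod_cast hb)
  by_cases hx : x ∈ Set.Ico ((b:ℝ) / R) ((b + 1) / R)
  · have := key.2 hx
    simp only [Set.indicator_of_mem hx, Set.indicator_of_mem this.1, gg,
      Set.indicator_of_mem this.2, one_mul]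
  · rw [Set.indicator_of_notMem hx]
    by_cases h0 : x ∈ Set.Ico (0:ℝ) 1
    · have : x ∉ SS R b := fun h => hx (key.1 ⟨h0, h⟩)
      simp [gg, this]
    · rw [Set.indicator_of_notMem h0]

theorem gg_int (R b : ℕ) (hb : b < R) : ∫ x in (0:ℝ)..1, gg R b x = 1 / R := by
  have := aux_mul R b hb (fun _ => 1)
  simp only [mul_one] at this
  rw [this]
  simp
  ring

theorem gg_int_scale (R b : ℕ) (hb : b < R) (N : ℕ) (hN : 0 < N) :
    ∫ x in (0:ℝ)..1, gg R b (N * x) = 1 / R := by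
  have := aux_scale (gg_per R b) (aux_int (gg_meas R b) (gg_bd R b)) N hN 0
  simp only [Int.cast_zero, zero_add] at this
  rw [this, gg_int R b hb]

theorem gg_int_mul (R b : ℕ) (hb : b < R) (N M : ℕ) (hN : 0 < N) (hM : 0 < M) :
    ∫ x in (0:ℝ)..1, gg R b (N * x) * gg R b ((N * (M * R) : ℕ) * x) = 1 / R * (1 / R) := by
  have hR : (0:ℝ) < R := by exact_mod_cast (by omega : 0 < R)
  have hmm : ∀ K : ℕ, Measurable (fun x : ℝ => gg R b (K * x)) := fun K =>
    (gg_meas R b).comp (measurable_const_mul _)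
  have h := aux_scale (f := fun x => gg R b x * gg R b ((M * R : ℕ) * x))
    ((gg_per R b).mul (per_scale (gg_per R b) _))
    (aux_int ((gg_meas R b).mul (hmm _)) (fun x => by
      rw [abs_mul]
      exact mul_le_one₀ (gg_bd _ _ _) (abs_nonneg _) (gg_bd _ _ _))) N hN 0
  simp only [Int.cast_zero, zero_add] at h
  have e : ∀ x : ℝ, ((N * (M * R) : ℕ) : ℝ) * x = ((M * R : ℕ) : ℝ) * (N * x) := by
    intro x; push_cast; ring
  simp only [e]
  rw [h, aux_mul R b hb]
  have e2 : ∀ x : ℝ, ((M * R : ℕ) : ℝ) * x = M * (R * x) := by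
    intro x; push_cast; ring
  simp only [e2]
  rw [intervalIntegral.integral_comp_mul_left (fun y => gg R b (M * y)) hR.ne']
  have e3 : (R:ℝ) * (b / R) = b := by field_simp
  have e4 : (R:ℝ) * ((b + 1) / R) = b + 1 := by field_simp
  have := aux_scale (gg_per R b) (aux_int (gg_meas R b) (gg_bd R b)) M hM b
  simp only [Int.cast_natCast] at this
  rw [e3, e4, this, gg_int R b hb]
  simp

theorem indep_indicator {Ω : Type*} {m : MeasurableSpace Ω} {μ : Measure Ω} {s t : Set Ω}
    (h : ProbabilityTheory.IndepSet s t μ) :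
    ProbabilityTheory.IndepFun (s.indicator fun _ => (1:ℝ)) (t.indicator fun _ => (1:ℝ)) μ := by
  rw [ProbabilityTheory.IndepFun_iff_Indep]
  have key : ∀ s : Set Ω, MeasurableSpace.comap (s.indicator fun _ => (1:ℝ)) inferInstance ≤
      MeasurableSpace.generateFrom {s} := by
    intro s
    rw [← measurable_iff_comap_le]
    have hs : MeasurableSet[MeasurableSpace.generateFrom {s}] s :=
      MeasurableSpace.measurableSet_generateFrom (Set.mem_singleton s)
    letI : MeasurableSpace Ω := MeasurableSpace.generateFrom {s}
    exact Measurable.indicator measurable_const hs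
  exact ProbabilityTheory.indep_of_indep_of_le_left
    (ProbabilityTheory.indep_of_indep_of_le_right h (key t)) (key s)

theorem ident_indicator {Ω : Type*} {m : MeasurableSpace Ω} {μ : Measure Ω}
    [IsProbabilityMeasure μ] {s t : Set Ω} (hs : MeasurableSet s) (ht : MeasurableSet t)
    (h : μ s = μ t) :
    ProbabilityTheory.IdentDistrib (s.indicator fun _ => (1:ℝ)) (t.indicator fun _ => (1:ℝ)) μ μ := by
  have ms : Measurable (s.indicator fun _ => (1:ℝ)) := measurable_const.indicator hs
  have mt : Measurable (t.indicator fun _ => (1:ℝ)) := measurable_const.indicator ht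
  refine ⟨ms.aemeasurable, mt.aemeasurable, ?_⟩
  ext u hu
  rw [Measure.map_apply ms hu, Measure.map_apply mt hu]
  classical
  rw [Set.indicator_const_preimage_eq_union, Set.indicator_const_preimage_eq_union]
  split_ifs <;> simp [h, prob_compl_eq_one_sub hs, prob_compl_eq_one_sub ht]

theorem main_ae (R b : ℕ) (hb : b < R) (c : ℕ) (hc : 0 < c) :
    ∀ᵐ x ∂(volume.restrict (Set.Ioc (0:ℝ) 1)),
      Tendsto (fun n : ℕ => (digitCount R b n ((c:ℝ) * x) : ℝ) / n) atTop (nhds (1 / R)) := by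
  set μ := volume.restrict (Set.Ioc (0:ℝ) 1) with hμ
  have : IsProbabilityMeasure μ := ⟨by simp [hμ]⟩
  have hR : 0 < R := by omega
  let E : ℕ → Set ℝ := fun i => (fun x : ℝ => ((c * R ^ i : ℕ) : ℝ) * x) ⁻¹' SS R b
  have hE : ∀ i, MeasurableSet (E i) := fun i => measurable_const_mul _ (SS_meas R b)
  have hEg : ∀ i x, (E i).indicator (fun _ => (1:ℝ)) x = gg R b (((c * R ^ i : ℕ) : ℝ) * x) := by
    intro i x; rfl
  have hEm : ∀ i, μ.real (E i) = 1 / R := by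
    intro i
    rw [← integral_indicator_one (hE i), ← gg_int_scale R b hb (c * R ^ i) (by positivity),
      intervalIntegral.integral_of_le zero_le_one]
    rfl
  have hEE : ∀ i j, i < j → μ.real (E i ∩ E j) = 1 / R * (1 / R) := by
    intro i j hij
    obtain ⟨k, rfl⟩ := Nat.exists_eq_add_of_lt hij
    rw [← integral_indicator_one ((hE i).inter (hE _)),
      ← gg_int_mul R b hb (c * R ^ i) (R ^ k) (by positivity) (by positivity),
      intervalIntegral.integral_of_le zero_le_one]
    congr 1
    ext x
    have e : c * R ^ i * (R ^ k * R) = c * R ^ (i + k + 1) := by ring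
    rw [e, ← hEg, ← hEg, Set.inter_indicator_one]
    rfl
  have hind : ∀ i j, i < j → ProbabilityTheory.IndepSet (E i) (E j) μ := by
    intro i j hij
    rw [ProbabilityTheory.indepSet_iff_measure_inter_eq_mul (hE i) (hE j) μ]
    rw [← ENNReal.toReal_eq_toReal_iff' (by finiteness) (by finiteness), ENNReal.toReal_mul]
    change μ.real _ = μ.real _ * μ.real _
    rw [hEE i j hij, hEm, hEm]
  have hlaw := ProbabilityTheory.strong_law_ae_real (μ := μ)
    (fun i => (E i).indicator (fun _ => (1:ℝ)))
    ((integrable_const _).indicator (hE 0))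
    (by
      intro i j hij
      rcases lt_or_gt_of_ne hij with h | h
      · exact indep_indicator (hind i j h)
      · exact (indep_indicator (hind j i h)).symm)
    (fun i => ident_indicator (hE i) (hE 0) (by
      rw [← ENNReal.toReal_eq_toReal_iff' (by finiteness) (by finiteness)]
      exact (hEm i).trans (hEm 0).symm))
  have hint : ∫ x, (E 0).indicator (fun _ => (1:ℝ)) x ∂μ = 1 / R := by
    rw [← hEm 0]; exact integral_indicator_one (hE 0)
  rw [hint] at hlaw
  filter_upwards [hlaw] with x hx
  refine hx.congr (fun n => ?_)
  congr 1
  have hmem : ∀ i, x ∈ E i ↔ digit R ((c:ℝ) * x) (i + 1) = (b:ℤ) := by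
    intro i
    have e : (R:ℝ) * (((c * R ^ i : ℕ) : ℝ) * x) = (R:ℝ) ^ (i + 1) * (c * x) := by
      push_cast; ring
    change ⌊(R:ℝ) * (((c * R ^ i : ℕ) : ℝ) * x)⌋ % (R:ℤ) = b ↔ _
    rw [e]; rfl
  classical
  simp only [Set.indicator_apply, hmem]
  rw [digitCount, Finset.card_filter, Nat.cast_sum, Finset.range_eq_Ico,
    Finset.sum_Ico_add' (fun j => if digit R ((c:ℝ) * x) j = (b:ℤ) then (1:ℝ) else 0) 0 n 1]
  have : Finset.Ico (0 + 1) (n + 1) = Finset.Icc 1 n := by ext; simp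
  rw [this]
  simp

/-- Almost every number in `Set.Ico 0 1` is absolutely normal. -/
theorem almost_all_absolutely_normal :
    volume {α : ℝ | α ∈ Set.Ico (0 : ℝ) 1 ∧ ∃ r : ℕ, 2 ≤ r ∧ ¬ NormalBase r α} = 0 := by
  have h : ∀ᵐ x ∂(volume.restrict (Set.Ico (0:ℝ) 1)), ∀ r : ℕ, 2 ≤ r → NormalBase r x := by
    rw [restrict_Ico_eq_restrict_Ioc]
    simp only [NormalBase, SimplyNormal]
    simp only [ae_all_iff]
    intro r hr n hn m b hb
    have := main_ae (r ^ n) b hb (r ^ m) (by positivity)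
    simpa using this
  rw [ae_restrict_iff' measurableSet_Ico, ae_iff] at h
  convert h using 2
  ext x
  simp [and_assoc]
end

section
/- Let r ≥ 2 be an integer and α a real number. If r^m·α is simply normal in base r^n for all integers n ≥ 1 and all integers m with 0 ≤ m < n, then α is normal in base r. -/
open MeasureTheory Filter Finset

theorem digitCount_succ (r b n : ℕ) (α : ℝ) :
    digitCount r b (n + 1) α = digitCount r b n α + if digit r α (n + 1) = (b : ℤ) then 1 else 0 := by
  unfold digitCount
  rw [← Finset.insert_Icc_right_eq_Icc_add_one (by omega), Finset.filter_insert]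
  split_ifs with hd
  · rw [Finset.card_insert_of_notMem (by simp)]
  · rfl

theorem digit_shift (r j : ℕ) (α : ℝ) : digit r ((r : ℝ) * α) j = digit r α (j + 1) := by
  unfold digit
  rw [pow_succ, mul_assoc]

theorem digitCount_shift (r b n : ℕ) (α : ℝ) :
    digitCount r b (n + 1) α = digitCount r b n ((r : ℝ) * α) + digitCount r b 1 α := by
  induction n with
  | zero => simp [digitCount]
  | succ k ih => rw [digitCount_succ, ih, digitCount_succ r b k, digit_shift]; ring

theorem SimplyNormal.shift {r : ℕ} {α : ℝ} (h : SimplyNormal r α) :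
    SimplyNormal r ((r : ℝ) * α) := by
  intro b hb
  have h1 := (h b hb).comp (tendsto_add_atTop_nat 1)
  have h2 : Tendsto (fun n : ℕ => (1 : ℝ) / n) atTop (nhds 0) := tendsto_one_div_atTop_nhds_zero_nat
  have h3 := (h1.mul (h2.const_add 1)).sub (h2.const_mul (digitCount r b 1 α : ℝ))
  simp only [add_zero, mul_one, mul_zero, sub_zero] at h3
  refine h3.congr' ?_
  filter_upwards [eventually_ge_atTop 1] with n hn
  have hn' : (n : ℝ) ≠ 0 := by positivity
  have hn2 : (n : ℝ) + 1 ≠ 0 := by positivity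
  simp only [Function.comp]
  rw [digitCount_shift r b n]
  push_cast
  field_simp
  ring

theorem SimplyNormal.shift_pow {r : ℕ} {α : ℝ} (h : SimplyNormal r α) (k : ℕ) :
    SimplyNormal r ((r : ℝ) ^ k * α) := by
  induction k with
  | zero => simpa using h
  | succ k ih => rw [pow_succ', mul_assoc]; exact ih.shift

/-- If `r ^ m * α` is simply normal in base `r ^ n` for all `n ≥ 1` and all `m < n`,
then `α` is normal in base `r`. -/
theorem normal_of_simplyNormal_lt (r : ℕ) (hr : 2 ≤ r) (α : ℝ)
    (h : ∀ n : ℕ, 1 ≤ n → ∀ m : ℕ, m < n → SimplyNormal (r ^ n) ((r : ℝ) ^ m * α)) :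
    NormalBase r α := by
  intro n hn m
  have h1 := (h n hn (m % n) (Nat.mod_lt _ hn)).shift_pow (m / n)
  have h2 : (((r ^ n : ℕ) : ℝ)) ^ (m / n) * ((r : ℝ) ^ (m % n) * α) = (r : ℝ) ^ m * α := by
    rw [← mul_assoc]
    push_cast
    rw [← pow_mul, ← pow_add, Nat.div_add_mod]
  rwa [h2] at h1
end

section
/- Let r ≥ 2 be an integer and let α be a real number that is normal in base r. Then for every finite word w = b_1 b_2 … b_k of digits in {0,…,r−1} (k ≥ 1), the number p_{w,n,α,r} of positions j ≥ 1 with j + k − 1 ≤ n such that α_{j,r} = b_1, α_{j+1,r} = b_2, …, α_{j+k−1,r} = b_k satisfies lim_{n→∞} p_{w,n,α,r}/n = 1/r^k. -/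
open MeasureTheory Filter Finset

def wordVal (r : ℕ) (w : ℕ → ℕ) : ℕ → ℕ
  | 0 => 0
  | k + 1 => r * wordVal r w k + w k

lemma wordVal_lt (r : ℕ) (w : ℕ → ℕ) (k : ℕ) (hw : ∀ i < k, w i < r) :
    wordVal r w k < r ^ k := by
  induction k with
  | zero => simp [wordVal]
  | succ k ih =>
    have h1 := ih (fun i hi => hw i (by omega))
    have h2 := hw k (by omega)
    simp only [wordVal]
    rw [pow_succ]
    nlinarith

lemma wordVal_iff (r : ℕ) (hr : 2 ≤ r) (w : ℕ → ℕ) (k : ℕ) (hw : ∀ i < k, w i < r) (z : ℤ) :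
    (∀ i < k, z / (r : ℤ) ^ (k - 1 - i) % r = (w i : ℤ)) ↔
      z % (r : ℤ) ^ k = (wordVal r w k : ℤ) := by
  induction k generalizing z with
  | zero => simp [wordVal]
  | succ k ih =>
    have hr0 : (0 : ℤ) < r := by omega
    have ih' := ih (fun i hi => hw i (by omega)) (z / r)
    have hk := hw k (by omega)
    have key : z % (r : ℤ) ^ (k + 1) = z % r + r * ((z / r) % (r : ℤ) ^ k) := by
      have hp : (0 : ℤ) < (r : ℤ) ^ k := by positivity
      have e1 := Int.emod_add_mul_ediv z r
      have e2 := Int.emod_add_mul_ediv (z / r) ((r : ℤ) ^ k)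
      have a1 := Int.emod_nonneg z hr0.ne'
      have a2 := Int.emod_lt_of_pos z hr0
      have b1 := Int.emod_nonneg (z / r) hp.ne'
      have b2 := Int.emod_lt_of_pos (z / r) hp
      set A := z % (r : ℤ)
      set C := (z / r) % (r : ℤ) ^ k
      set D := (z / r) / (r : ℤ) ^ k
      have hz : z = (A + r * C) + (r : ℤ) ^ (k + 1) * D := by
        rw [← e1, ← e2]; ring
      rw [hz, Int.add_mul_emod_self_left, Int.emod_eq_of_lt]
      · positivity
      · rw [pow_succ]; nlinarith
    have hL : (∀ i < k + 1, z / (r : ℤ) ^ (k + 1 - 1 - i) % r = (w i : ℤ)) ↔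
        (z % r = (w k : ℤ)) ∧ (∀ i < k, (z / r) / (r : ℤ) ^ (k - 1 - i) % r = (w i : ℤ)) := by
      have hs : ∀ i < k, (z / r) / (r : ℤ) ^ (k - 1 - i) = z / (r : ℤ) ^ (k + 1 - 1 - i) := by
        intro i hi
        rw [Int.ediv_ediv_of_nonneg hr0.le, ← pow_succ']
        congr 2; omega
      constructor
      · intro h
        refine ⟨by simpa using h k (by omega), fun i hi => ?_⟩
        rw [hs i hi]; exact h i (by omega)
      · rintro ⟨h1, h2⟩ i hi
        rcases Nat.lt_succ_iff_lt_or_eq.mp hi with hi | rfl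
        · rw [← hs i hi]; exact h2 i hi
        · simpa using h1
    rw [hL, ih', key]
    simp only [wordVal]
    push_cast
    constructor
    · rintro ⟨h1, h2⟩
      rw [h1, h2]; ring
    · intro h
      have a1 := Int.emod_nonneg z hr0.ne'
      have a2 := Int.emod_lt_of_pos z hr0
      have h1 : z % r = (w k : ℤ) := by
        have := congrArg (· % (r : ℤ)) h
        simp only [Int.add_mul_emod_self_left, Int.mul_add_emod_self_left] at this
        rw [Int.emod_emod_of_dvd _ dvd_rfl, Int.emod_eq_of_lt (a := (w k : ℤ)) (by omega) (by omega)] at this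
        exact this
      refine ⟨h1, ?_⟩
      have h3 : (r : ℤ) * (z / r % (r : ℤ) ^ k) = r * (wordVal r w k : ℤ) := by linarith
      exact mul_left_cancel₀ hr0.ne' h3

lemma word_digit_iff (r : ℕ) (hr : 2 ≤ r) (α : ℝ) (k : ℕ) (hk : 1 ≤ k) (w : ℕ → ℕ)
    (hw : ∀ i < k, w i < r) (m j : ℕ) :
    (∀ i < k, digit r α (k * j + m + 1 + i) = (w i : ℤ)) ↔
      digit (r ^ k) ((r : ℝ) ^ m * α) (j + 1) = (wordVal r w k : ℤ) := by
  have hr0 : (r : ℝ) ≠ 0 := by positivity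
  unfold digit
  push_cast
  rw [← wordVal_iff r hr w k hw]
  refine forall₂_congr fun i hi => ?_
  have : ⌊(r : ℝ) ^ (k * j + m + 1 + i) * α⌋ =
      ⌊((r : ℝ) ^ k) ^ (j + 1) * ((r : ℝ) ^ m * α)⌋ / (r : ℤ) ^ (k - 1 - i) := by
    have h := Int.floor_div_natCast (((r : ℝ) ^ k) ^ (j + 1) * ((r : ℝ) ^ m * α)) (r ^ (k - 1 - i))
    push_cast at h
    rw [← h]
    congr 1
    rw [eq_div_iff (by positivity), ← pow_mul]
    have : k * (j + 1) + m = k * j + m + 1 + i + (k - 1 - i) := by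
      rw [mul_add]; omega
    rw [← mul_assoc, ← pow_add, this, pow_add _ _ (k - 1 - i)]
    ring
  rw [this]

lemma word_count_eq (r : ℕ) (hr : 2 ≤ r) (α : ℝ) (k : ℕ) (hk : 1 ≤ k) (w : ℕ → ℕ)
    (hw : ∀ i < k, w i < r) (n : ℕ) :
    ((Finset.Icc 1 n).filter
        (fun j => j + k - 1 ≤ n ∧ ∀ i < k, digit r α (j + i) = (w i : ℤ))).card =
      ∑ m ∈ Finset.range k,
        digitCount (r ^ k) (wordVal r w k) ((n - m) / k) ((r : ℝ) ^ m * α) := by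
  rw [Finset.card_eq_sum_card_fiberwise (f := fun s => (s - 1) % k) (t := Finset.range k)
    (fun s _ => by simpa using Nat.mod_lt _ hk)]
  refine Finset.sum_congr rfl fun m hm => ?_
  have hm : m < k := by simpa using hm
  unfold digitCount
  symm
  have hle : ∀ j, j + 1 ≤ (n - m) / k ↔ k * j + m + 1 + k - 1 ≤ n := by
    intro j
    rw [Nat.le_div_iff_mul_le hk, add_mul, mul_comm j k]
    omega
  refine Finset.card_bij (fun j _ => k * (j - 1) + m + 1) ?_ ?_ ?_
  · intro j hj
    simp only [Finset.mem_filter, Finset.mem_Icc] at hj ⊢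
    obtain ⟨⟨h1, h2⟩, h3⟩ := hj
    obtain ⟨j, rfl⟩ : ∃ i, j = i + 1 := ⟨j - 1, by omega⟩
    have h4 := (hle j).1 h2
    simp only [Nat.add_sub_cancel]
    refine ⟨⟨⟨by omega, by omega⟩, h4, (word_digit_iff r hr α k hk w hw m j).2 h3⟩, ?_⟩
    rw [Nat.mul_add_mod, Nat.mod_eq_of_lt hm]
  · intro a ha b hb hab
    simp only [Finset.mem_filter, Finset.mem_Icc] at ha hb
    have : k * (a - 1) = k * (b - 1) := by omega
    have := Nat.eq_of_mul_eq_mul_left hk this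
    omega
  · intro s hs
    simp only [Finset.mem_filter, Finset.mem_Icc] at hs
    obtain ⟨⟨⟨h1, h2⟩, h3, h4⟩, h5⟩ := hs
    have e : s = k * ((s - 1) / k) + m + 1 := by
      have := Nat.div_add_mod (s - 1) k
      omega
    set j := (s - 1) / k
    refine ⟨j + 1, ?_, by simpa using e.symm⟩
    simp only [Finset.mem_filter, Finset.mem_Icc]
    rw [e] at h3 h4
    exact ⟨⟨Nat.le_add_left 1 j, (hle j).2 h3⟩, (word_digit_iff r hr α k hk w hw m j).1 h4⟩

lemma tendsto_quot (k m : ℕ) (hk : 1 ≤ k) :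
    Tendsto (fun n : ℕ => (((n - m) / k : ℕ) : ℝ) / n) atTop (nhds (1 / k)) := by
  have hk' : (1 : ℝ) ≤ k := by exact_mod_cast hk
  have hlow : Tendsto (fun n : ℕ => (1 / k : ℝ) - ((m + k : ℕ) : ℝ) / n) atTop (nhds (1 / k)) := by
    simpa using (tendsto_const_nhds (x := (1 / k : ℝ))).sub
      (tendsto_const_div_atTop_nhds_zero_nat ((m + k : ℕ) : ℝ))
  refine tendsto_of_tendsto_of_tendsto_of_le_of_le' hlow tendsto_const_nhds ?_ ?_
  · filter_upwards [eventually_ge_atTop 1] with n hn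
    have hn' : (0 : ℝ) < n := by exact_mod_cast hn
    have h : n ≤ k * ((n - m) / k) + (m + k) := by
      have := Nat.div_add_mod (n - m) k
      have := Nat.mod_lt (n - m) hk
      omega
    have h' : (n : ℝ) ≤ k * (((n - m) / k : ℕ) : ℝ) + ((m + k : ℕ) : ℝ) := by exact_mod_cast h
    have hc : (0 : ℝ) ≤ ((m + k : ℕ) : ℝ) := by positivity
    rw [sub_le_iff_le_add, ← add_div, div_le_div_iff₀ (by positivity) hn']
    nlinarith
  · filter_upwards [eventually_ge_atTop 1] with n hn
    have hn' : (0 : ℝ) < n := by exact_mod_cast hn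
    have h : ((n - m) / k) * k ≤ n := (Nat.div_mul_le_self _ _).trans (Nat.sub_le _ _)
    have h' : (((n - m) / k : ℕ) : ℝ) * k ≤ n := by exact_mod_cast h
    rw [div_le_div_iff₀ hn' (by positivity)]
    linarith

/-- If `α` is normal in base `r`, then every `r`-word `w` of length `k ≥ 1` occurs
among the first `n` digits of `α` with asymptotic frequency `1 / r ^ k`. -/
theorem word_frequency (r : ℕ) (hr : 2 ≤ r) (α : ℝ) (hα : NormalBase r α)
    (k : ℕ) (hk : 1 ≤ k) (w : ℕ → ℕ) (hw : ∀ i < k, w i < r) :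
    Tendsto
      (fun n : ℕ =>
        (((Finset.Icc 1 n).filter
            (fun j => j + k - 1 ≤ n ∧ ∀ i < k, digit r α (j + i) = (w i : ℤ))).card : ℝ) / n)
      atTop (nhds (1 / (r : ℝ) ^ k)) := by
  simp_rw [word_count_eq r hr α k hk w hw]
  have hk0 : (k : ℝ) ≠ 0 := by positivity
  have hmain : ∀ m ∈ Finset.range k, Tendsto (fun n : ℕ =>
      (digitCount (r ^ k) (wordVal r w k) ((n - m) / k) ((r : ℝ) ^ m * α) : ℝ) / n) atTop
      (nhds (1 / (r : ℝ) ^ k * (1 / k))) := by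
    intro m _
    have h1 := hα k hk m _ (wordVal_lt r w k hw)
    have hq : Tendsto (fun n : ℕ => (n - m) / k) atTop atTop :=
      (Nat.tendsto_div_const_atTop (by omega)).comp (tendsto_sub_atTop_nat m)
    have h2 := (h1.comp hq).mul (tendsto_quot k m hk)
    push_cast at h2
    refine h2.congr fun n => ?_
    simp only [Function.comp]
    by_cases h0 : (n - m) / k = 0
    · simp [h0, digitCount]
    · have : (((n - m) / k : ℕ) : ℝ) ≠ 0 := by exact_mod_cast h0
      exact div_mul_div_cancel₀ this
  have := tendsto_finsetSum (Finset.range k) hmain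
  simp only [Finset.sum_const, Finset.card_range, nsmul_eq_mul] at this
  have e : (k : ℝ) * (1 / (r : ℝ) ^ k * (1 / k)) = 1 / (r : ℝ) ^ k := by field_simp
  rw [e] at this
  refine this.congr fun n => ?_
  push_cast
  rw [Finset.sum_div]
end

section
/- Let r ≥ 2 be an integer and b ∈ {0,…,r−1} a digit. There exists a positive constant D such that for every real ε > 0 and every positive integer n, the Lebesgue measure of the set M_b(n,ε) = {α ∈ [0,1) : |p_{b,n,α,r}/n − 1/r| ≥ ε} is at most D/(ε^4 · n^2). -/
open MeasureTheory Filter Finset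

noncomputable def devS (r b n : ℕ) (α : ℝ) : ℝ := (digitCount r b n α : ℝ) - n / r

lemma digit_meas (r j : ℕ) : Measurable (fun α => digit r α j) := by
  unfold digit
  have h1 : Measurable (fun α : ℝ => ⌊(r : ℝ) ^ j * α⌋) :=
    Int.measurable_floor.comp (measurable_const.mul measurable_id)
  exact (measurable_of_countable (fun z : ℤ => z % (r : ℤ))).comp h1

lemma digitCount_sum (r b n : ℕ) (α : ℝ) : (digitCount r b n α : ℝ) =
    ∑ j ∈ Finset.range n, if digit r α (j + 1) = (b : ℤ) then (1 : ℝ) else 0 := by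
  unfold digitCount
  rw [Finset.card_filter, Nat.cast_sum, Finset.range_eq_Ico, Finset.sum_Ico_add' (fun j => if digit r α j = (b : ℤ) then (1 : ℝ) else 0) 0 n 1]
  refine Finset.sum_congr ?_ ?_
  · ext x; simp [Nat.lt_succ_iff]
  · intros; simp

lemma digitCount_meas (r b n : ℕ) : Measurable (fun α => (digitCount r b n α : ℝ)) := by
  simp_rw [digitCount_sum]
  refine Finset.measurable_sum _ fun j _ => ?_
  exact Measurable.ite (digit_meas r (j+1) (measurableSet_singleton _)) measurable_const measurable_const

lemma devS_meas (r b n : ℕ) : Measurable (devS r b n) :=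
  (digitCount_meas r b n).sub measurable_const

lemma devS_mem (r b n : ℕ) (α : ℝ) : devS r b n α ∈ Set.Icc (-(n / r : ℝ)) n := by
  have h1 : digitCount r b n α ≤ n := by
    unfold digitCount
    exact (Finset.card_filter_le _ _).trans (by simp)
  have h2 : (digitCount r b n α : ℝ) ≤ n := by exact_mod_cast h1
  have h3 : (0 : ℝ) ≤ digitCount r b n α := by positivity
  have h4 : (0 : ℝ) ≤ n / r := by positivity
  unfold devS
  constructor <;> linarith

lemma devS_ii (r b n : ℕ) (F : ℝ → ℝ) (hF : Continuous F) (x y : ℝ) :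
    IntervalIntegrable (fun α => F (devS r b n α)) volume x y := by
  obtain ⟨C, hC⟩ := (isCompact_Icc (a := (-(n / r : ℝ))) (b := (n:ℝ))).exists_bound_of_continuousOn hF.continuousOn
  rw [intervalIntegrable_iff]
  refine Measure.integrableOn_of_bounded (M := C) (by simp) ?_ ?_
  · exact (hF.measurable.comp (devS_meas r b n)).aestronglyMeasurable
  · exact ae_of_all _ fun α => hC _ (devS_mem r b n α)

lemma digit_succ (r j : ℕ) (α : ℝ) : digit r α (j + 1) = digit r (r * α) j := by
  unfold digit; rw [pow_succ, mul_assoc]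

lemma digit_add (r j k : ℕ) (hj : 1 ≤ j) (α : ℝ) : digit r (α + k) j = digit r α j := by
  obtain ⟨i, rfl⟩ := Nat.exists_eq_add_of_le' hj
  unfold digit
  have : (r : ℝ) ^ (i+1) * (α + k) = (r : ℝ) ^ (i+1) * α + ((r * (r ^ i * k) : ℤ) : ℝ) := by
    push_cast; ring
  rw [this, Int.floor_add_intCast, Int.add_mul_emod_self_left]

lemma devS_add (r b n k : ℕ) (α : ℝ) : devS r b n (α + k) = devS r b n α := by
  unfold devS
  simp_rw [digitCount_sum]
  simp [digit_add]

lemma devS_succ (r b n : ℕ) (α : ℝ) : devS r b (n + 1) α =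
    (if digit r (r * α) 0 = (b : ℤ) then 1 - 1 / (r : ℝ) else - (1 / (r : ℝ))) + devS r b n (r * α) := by
  unfold devS
  simp_rw [digitCount_sum, Finset.sum_range_succ', digit_succ r _ α]
  push_cast
  split_ifs <;> ring

lemma rec_int (r : ℕ) (hr : 2 ≤ r) (b : ℕ) (hb : b < r) (n : ℕ) (F : ℝ → ℝ) (hF : Continuous F) :
    ∫ α in (0:ℝ)..1, F (devS r b (n + 1) α) =
      (1 / (r : ℝ)) * (∫ α in (0:ℝ)..1, F (1 - 1 / (r : ℝ) + devS r b n α)) +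
      (1 - 1 / (r : ℝ)) * (∫ α in (0:ℝ)..1, F (- (1 / (r : ℝ)) + devS r b n α)) := by
  have hr0 : (r : ℝ) ≠ 0 := by positivity
  set G : ℝ → ℝ := fun β => F ((if digit r β 0 = (b : ℤ) then 1 - 1 / (r : ℝ) else - (1 / (r : ℝ))) + devS r b n β) with hG
  have h1 : ∀ α, F (devS r b (n + 1) α) = G (r * α) := by
    intro α; rw [hG, devS_succ]
  have hGi : ∀ x y, IntervalIntegrable G volume x y := by
    intro x y
    have e1 := devS_ii r b n (fun s => F (1 - 1 / (r : ℝ) + s)) (by fun_prop) x y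
    have e2 := devS_ii r b n (fun s => F (- (1 / (r : ℝ)) + s)) (by fun_prop) x y
    rw [intervalIntegrable_iff] at *
    have hm : MeasurableSet {β | digit r β 0 = (b : ℤ)} := digit_meas r 0 (measurableSet_singleton _)
    have : G = Set.piecewise {β | digit r β 0 = (b : ℤ)} (fun α => F (1 - 1 / (r : ℝ) + devS r b n α)) (fun α => F (- (1 / (r : ℝ)) + devS r b n α)) := by
      funext β
      simp only [hG, Set.piecewise, Set.mem_setOf_eq]
      split_ifs <;> rfl
    rw [this]
    exact Integrable.piecewise hm e1.integrableOn e2.integrableOn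
  simp_rw [h1]
  rw [intervalIntegral.integral_comp_mul_left G hr0]
  have h2 := intervalIntegral.sum_integral_adjacent_intervals (f := G) (μ := volume) (a := fun k : ℕ => (k : ℝ)) (n := r) (fun k _ => hGi _ _)
  have h3 : ∀ k ∈ Finset.range r, ∫ x in ((k : ℕ) : ℝ)..((k + 1 : ℕ) : ℝ), G x =
      if k = b then ∫ α in (0:ℝ)..1, F (1 - 1 / (r : ℝ) + devS r b n α) else
        ∫ α in (0:ℝ)..1, F (- (1 / (r : ℝ)) + devS r b n α) := by
    intro k hk
    have hk' := Finset.mem_range.1 hk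
    have e : ∫ x in ((k : ℕ) : ℝ)..((k + 1 : ℕ) : ℝ), G x = ∫ x in (0:ℝ)..1, G (x + k) := by
      rw [intervalIntegral.integral_comp_add_right]
      push_cast; simp [add_comm]
    have e2 : ∫ x in (0:ℝ)..1, G (x + k) = ∫ α in (0:ℝ)..1, F ((if k = b then 1 - 1 / (r : ℝ) else - (1 / (r : ℝ))) + devS r b n α) := by
      rw [intervalIntegral.integral_of_le zero_le_one, intervalIntegral.integral_of_le zero_le_one,
        ← integral_Ico_eq_integral_Ioc, ← integral_Ico_eq_integral_Ioc]
      refine setIntegral_congr_fun measurableSet_Ico fun x hx => ?_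
      have hd : digit r (x + k) 0 = k := by
        unfold digit
        have : ⌊x⌋ = 0 := Int.floor_eq_zero_iff.2 hx
        rw [pow_zero, one_mul, Int.floor_add_natCast, this, zero_add]
        exact Int.emod_eq_of_lt (by positivity) (by exact_mod_cast hk')
      simp only [hG, hd, devS_add, Nat.cast_inj]
    rw [e, e2]
    split_ifs <;> rfl
  rw [Finset.sum_congr rfl h3] at h2
  simp only [Nat.cast_zero] at h2
  rw [mul_zero, mul_one, ← h2, ← Finset.add_sum_erase _ _ (Finset.mem_range.2 hb)]
  rw [Finset.sum_congr rfl (g := fun _ => ∫ α in (0:ℝ)..1, F (- (1 / (r : ℝ)) + devS r b n α))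
    (fun k hk => by rw [if_neg (Finset.ne_of_mem_erase hk)])]
  rw [Finset.sum_const, Finset.card_erase_of_mem (Finset.mem_range.2 hb), Finset.card_range]
  simp only [if_true, smul_eq_mul, nsmul_eq_mul]
  rw [Nat.cast_sub (by omega)]
  field_simp
  push_cast
  ring

lemma lin_int (r b n : ℕ) (c0 c1 c2 c3 c4 : ℝ) :
    ∫ α in (0:ℝ)..1, (c0 + c1 * devS r b n α + c2 * devS r b n α ^ 2 + c3 * devS r b n α ^ 3 + c4 * devS r b n α ^ 4) =
    c0 + c1 * (∫ α in (0:ℝ)..1, devS r b n α) + c2 * (∫ α in (0:ℝ)..1, devS r b n α ^ 2)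
     + c3 * (∫ α in (0:ℝ)..1, devS r b n α ^ 3) + c4 * (∫ α in (0:ℝ)..1, devS r b n α ^ 4) := by
  have h := fun F hF => devS_ii r b n F hF 0 1
  rw [intervalIntegral.integral_add (h (fun s => c0 + c1 * s + c2 * s ^ 2 + c3 * s^3) (by fun_prop)) (h (fun s => c4 * s ^ 4) (by fun_prop)),
    intervalIntegral.integral_add (h (fun s => c0 + c1 * s + c2 * s ^ 2) (by fun_prop)) (h (fun s => c3 * s ^ 3) (by fun_prop)),
    intervalIntegral.integral_add (h (fun s => c0 + c1 * s) (by fun_prop)) (h (fun s => c2 * s ^ 2) (by fun_prop)),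
    intervalIntegral.integral_add (h (fun s => c0) (by fun_prop)) (h (fun s => c1 * s) (by fun_prop))]
  simp only [intervalIntegral.integral_const_mul, intervalIntegral.integral_const]
  simp

lemma moments (r : ℕ) (hr : 2 ≤ r) (b : ℕ) (hb : b < r) (n : ℕ) :
    (∫ α in (0:ℝ)..1, devS r b n α) = 0 ∧ (∫ α in (0:ℝ)..1, devS r b n α ^ 2) ≤ n ∧
    (∫ α in (0:ℝ)..1, devS r b n α ^ 4) ≤ 3 * n ^ 2 := by
  induction n with
  | zero =>
    have : ∀ α, devS r b 0 α = 0 := by intro α; simp [devS, digitCount]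
    simp [this]
  | succ n ih =>
    obtain ⟨i1, i2, i4⟩ := ih
    have hp0 : (0:ℝ) ≤ 1 / r := by positivity
    have hp1 : (1:ℝ) / r ≤ 1 := by
      rw [div_le_one (by positivity)]; exact_mod_cast (by omega : 1 ≤ r)
    have R := rec_int r hr b hb n
    have L := lin_int r b n
    have hI2 : 0 ≤ ∫ α in (0:ℝ)..1, devS r b n α ^ 2 :=
      intervalIntegral.integral_nonneg zero_le_one (fun _ _ => by positivity)
    generalize (1:ℝ) / r = p at *
    have E1 : ∀ x, ∫ α in (0:ℝ)..1, (x + devS r b n α) = x := by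
      intro x
      have := L x 1 0 0 0
      simp only [one_mul, zero_mul, add_zero, i1] at this
      exact this
    have E2 : ∀ x, ∫ α in (0:ℝ)..1, (x + devS r b n α)^2 = x^2 + ∫ α in (0:ℝ)..1, devS r b n α ^ 2 := by
      intro x
      have := L (x^2) (2*x) 1 0 0
      simp only [one_mul, zero_mul, mul_zero, add_zero, i1] at this
      rw [← this]; congr 1; funext α; ring
    have E4 : ∀ x, ∫ α in (0:ℝ)..1, (x + devS r b n α)^4 = x^4 + 6*x^2 * (∫ α in (0:ℝ)..1, devS r b n α ^ 2) + 4 * x * (∫ α in (0:ℝ)..1, devS r b n α ^ 3) + ∫ α in (0:ℝ)..1, devS r b n α ^ 4 := by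
      intro x
      have := L (x^4) (4*x^3) (6*x^2) (4*x) 1
      simp only [one_mul, mul_zero, add_zero, i1] at this
      rw [← this]; congr 1; funext α; ring
    have R1 := R (fun s => s) (by fun_prop)
    have R2 := R (fun s => s^2) (by fun_prop)
    have R4 := R (fun s => s^4) (by fun_prop)
    simp only [E1, E2, E4] at R1 R2 R4
    rw [R1, R2, R4]
    generalize (∫ α in (0:ℝ)..1, devS r b n α ^ 2) = A at *
    generalize (∫ α in (0:ℝ)..1, devS r b n α ^ 3) = B at *
    generalize (∫ α in (0:ℝ)..1, devS r b n α ^ 4) = C at *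
    have hq : 0 ≤ 1 - p := by linarith
    have v0 : 0 ≤ p * (1 - p) := mul_nonneg hp0 hq
    have v1 : p * (1 - p) ≤ 1 := by nlinarith
    have v4 : p * (1-p)^4 + (1-p) * p^4 ≤ 1 := by
      have a1 : (1-p)^4 ≤ 1 := pow_le_one₀ hq (by linarith)
      have a2 : p^4 ≤ 1 := pow_le_one₀ hp0 hp1
      nlinarith
    push_cast
    refine ⟨by ring, ?_, ?_⟩
    · have : p * ((1 - p) ^ 2 + A) + (1 - p) * ((-p) ^ 2 + A) = p * (1-p) + A := by ring
      linarith
    · have : p * ((1 - p) ^ 4 + 6 * (1 - p) ^ 2 * A + 4 * (1 - p) * B + C) +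
        (1 - p) * ((-p) ^ 4 + 6 * (-p) ^ 2 * A + 4 * -p * B + C) = (p * (1-p)^4 + (1-p) * p^4) + 6 * ((p*(1-p)) * A) + C := by ring
      have w : (p*(1-p)) * A ≤ 1 * n := mul_le_mul v1 i2 hI2 zero_le_one
      nlinarith

/-- There is a constant `D > 0` such that the measure of the set of numbers in
`Set.Ico 0 1` whose digit frequency deviates from `1 / r` by at least `ε` after `n`
digits is at most `D / (ε ^ 4 * n ^ 2)`. -/
theorem measure_deviation_bound (r : ℕ) (hr : 2 ≤ r) (b : ℕ) (hb : b < r) :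
    ∃ D : ℝ, 0 < D ∧ ∀ ε : ℝ, 0 < ε → ∀ n : ℕ, 1 ≤ n →
      volume {α : ℝ | α ∈ Set.Ico (0 : ℝ) 1 ∧
          ε ≤ |(digitCount r b n α : ℝ) / n - 1 / r|} ≤
        ENNReal.ofReal (D / (ε ^ 4 * n ^ 2)) := by
  refine ⟨3, by norm_num, fun ε hε n hn => ?_⟩
  have hn0 : (0:ℝ) < n := by exact_mod_cast hn
  have hi : Integrable (fun α => devS r b n α ^ 4) (volume.restrict (Set.Ico (0:ℝ) 1)) := by
    have := devS_ii r b n (fun s => s^4) (by fun_prop) 0 1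
    rw [intervalIntegrable_iff_integrableOn_Ico_of_le zero_le_one] at this
    exact this
  have hM := mul_meas_ge_le_integral_of_nonneg (ae_of_all _ fun α => by positivity) hi ((ε * n)^4)
  rw [integral_Ico_eq_integral_Ioc, ← intervalIntegral.integral_of_le zero_le_one] at hM
  have hM' := hM.trans (moments r hr b hb n).2.2
  have hsub : {α : ℝ | α ∈ Set.Ico (0 : ℝ) 1 ∧ ε ≤ |(digitCount r b n α : ℝ) / n - 1 / r|} ⊆
      {α | (ε * n)^4 ≤ devS r b n α ^ 4} ∩ Set.Ico (0:ℝ) 1 := by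
    rintro α ⟨h1, h2⟩
    refine ⟨?_, h1⟩
    have e : devS r b n α = ((digitCount r b n α : ℝ) / n - 1 / r) * n := by
      unfold devS; field_simp
    have : ε * n ≤ |devS r b n α| := by
      rw [e, abs_mul, abs_of_pos hn0]; gcongr
    have h4 : (ε * n)^4 ≤ |devS r b n α|^4 := by gcongr
    rwa [Even.pow_abs (by decide)] at h4
  have hms : MeasurableSet {α | (ε * n)^4 ≤ devS r b n α ^ 4} :=
    measurableSet_le measurable_const ((devS_meas r b n).pow_const 4)
  refine (measure_mono hsub).trans ?_
  rw [← Measure.restrict_apply hms]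
  rw [← ENNReal.ofReal_toReal (measure_ne_top (volume.restrict (Set.Ico (0:ℝ) 1)) _)]
  refine ENNReal.ofReal_le_ofReal ?_
  rw [le_div_iff₀ (by positivity)]
  have hM2 : (ε * n)^4 * ((volume.restrict (Set.Ico (0:ℝ) 1)) {α | (ε * n)^4 ≤ devS r b n α ^ 4}).toReal ≤ 3 * n^2 := hM'
  generalize ((volume.restrict (Set.Ico (0:ℝ) 1)) {α | (ε * n)^4 ≤ devS r b n α ^ 4}).toReal = T at *
  have : T * (ε^4 * n^2) * n^2 ≤ 3 * n^2 := by
    calc _ = (ε * n)^4 * T := by ring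
      _ ≤ _ := hM2
  exact le_of_mul_le_mul_right this (by positivity)
end

section
/- Let r ≥ 2 be an integer, b ∈ {0,…,r−1} a digit, and ε > 0 a real number. The set M_b(ε) of all α ∈ [0,1) such that |p_{b,n,α,r}/n − 1/r| ≥ ε holds for infinitely many positive integers n is a Lebesgue null set. -/
open MeasureTheory Filter Finset

open ProbabilityTheory in
theorem aux_indep {Ω : Type*} {m : MeasurableSpace Ω} {μ : Measure Ω} [IsProbabilityMeasure μ]
    {A B : Set Ω} (hA : MeasurableSet A) (hB : MeasurableSet B)
    (h : μ (A ∩ B) = μ A * μ B) :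
    IndepFun (A.indicator (fun _ => (1:ℝ))) (B.indicator (fun _ => (1:ℝ))) μ := by
  have := (indepSet_iff_measure_inter_eq_mul hA hB μ).2 h
  have key : ∀ C : Set Ω, (MeasurableSpace.comap (C.indicator (fun _ => (1:ℝ))) inferInstance)
      ≤ MeasurableSpace.generateFrom {C} := by
    intro C
    rw [← measurable_iff_comap_le]
    refine Measurable.indicator measurable_const ?_
    exact MeasurableSpace.measurableSet_generateFrom rfl
  rw [IndepFun_iff_Indep]
  exact indep_of_indep_of_le_left (indep_of_indep_of_le_right this (key B)) (key A)

open ProbabilityTheory in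
theorem aux_ident {Ω : Type*} {m : MeasurableSpace Ω} {μ : Measure Ω} [IsProbabilityMeasure μ]
    {A B : Set Ω} (hA : MeasurableSet A) (hB : MeasurableSet B)
    (h : μ A = μ B) :
    IdentDistrib (A.indicator (fun _ => (1:ℝ))) (B.indicator (fun _ => (1:ℝ))) μ μ := by
  have mA : Measurable (A.indicator (fun _ => (1:ℝ))) := measurable_const.indicator hA
  have mB : Measurable (B.indicator (fun _ => (1:ℝ))) := measurable_const.indicator hB
  refine ⟨mA.aemeasurable, mB.aemeasurable, ?_⟩
  ext s hs
  rw [Measure.map_apply mA hs, Measure.map_apply mB hs]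
  classical
  rw [Set.indicator_const_preimage_eq_union, Set.indicator_const_preimage_eq_union]
  have hc : μ Aᶜ = μ Bᶜ := by rw [prob_compl_eq_one_sub hA, prob_compl_eq_one_sub hB, h]
  split_ifs <;> simp [h, hc]

theorem aux_fiber (N k : ℕ) (hN : 0 < N) (α : ℝ) :
    ⌊(N:ℝ) * α⌋ = (k:ℤ) ↔ α ∈ Set.Ico ((k:ℝ)/N) ((k+1:ℝ)/N) := by
  have : (0:ℝ) < N := by exact_mod_cast hN
  rw [Int.floor_eq_iff, Set.mem_Ico, div_le_iff₀ this, lt_div_iff₀ this]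
  simp [mul_comm]

theorem aux_div (N d : ℕ) (hd : 0 < d) (α : ℝ) :
    ⌊(N:ℝ) * α⌋ = ⌊((N * d : ℕ):ℝ) * α⌋ / (d:ℤ) := by
  have : (d:ℝ) ≠ 0 := by positivity
  rw [← Int.floor_div_natCast]
  congr 1
  push_cast
  field_simp

theorem aux_digit (r : ℕ) (hr : 0 < r) (b : ℕ) (hb : b < r) (m k : ℕ) (α : ℝ) :
   (⌊((r^m : ℕ):ℝ) * α⌋ = (k:ℤ) ∧ digit r α (m+1) = b) ↔
     α ∈ Set.Ico (((k*r+b:ℕ):ℝ)/((r^m*r:ℕ):ℝ)) (((k*r+b:ℕ)+1:ℝ)/((r^m*r:ℕ):ℝ)) := by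
  rw [← aux_fiber _ _ (by positivity), aux_div (r^m) r hr, digit]
  have : (r:ℝ)^(m+1) = ((r^m*r:ℕ):ℝ) := by push_cast; ring
  rw [this]
  generalize ⌊((r^m*r:ℕ):ℝ) * α⌋ = z
  have hr' : (0:ℤ) < r := by exact_mod_cast hr
  have hb' : (b:ℤ) < r := by exact_mod_cast hb
  push_cast
  constructor
  · rintro ⟨h1, h2⟩
    have := Int.mul_ediv_add_emod z r
    rw [h1, h2] at this
    linarith
  · rintro rfl
    constructor
    · rw [mul_comm, Int.mul_add_ediv_left _ _ hr'.ne', Int.ediv_eq_zero_of_lt (by positivity) hb', add_zero]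
    · rw [mul_comm, Int.mul_add_emod_self_left, Int.emod_eq_of_lt (by positivity) hb']

theorem aux_meas_floor (N : ℕ) (D : Set ℤ) : MeasurableSet {α : ℝ | ⌊(N:ℝ) * α⌋ ∈ D} := by
  have : Measurable (fun α : ℝ => ⌊(N:ℝ) * α⌋) := Int.measurable_floor.comp (measurable_const_mul _)
  exact this (by trivial)

theorem aux_meas (r b j : ℕ) : MeasurableSet {α : ℝ | digit r α j = b} := by
  have := aux_meas_floor (r^j) {z | z % r = b}
  simpa [digit] using this

theorem aux_restr (N : ℕ) (hN : 0 < N) (P : ℝ → Prop) (D : Set ℤ) [DecidablePred (· ∈ D)] :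
   {α : ℝ | ⌊(N:ℝ) * α⌋ ∈ D ∧ P α} ∩ Set.Ico 0 1 =
    ⋃ k ∈ (range N).filter (fun k : ℕ => (k:ℤ) ∈ D), {α | ⌊(N:ℝ) * α⌋ = (k:ℤ) ∧ P α} := by
  have hN' : (0:ℝ) < N := by exact_mod_cast hN
  ext α
  simp only [Set.mem_inter_iff, Set.mem_ofPred_eq, Set.mem_Ico, Set.mem_iUnion, Finset.mem_filter,
    Finset.mem_range, exists_prop]
  constructor
  · rintro ⟨⟨h1, h2⟩, h3, h4⟩
    have h0 : 0 ≤ ⌊(N:ℝ) * α⌋ := Int.floor_nonneg.2 (by positivity)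
    have hl : ⌊(N:ℝ) * α⌋ < N := by
      rw [Int.floor_lt]; push_cast; nlinarith
    refine ⟨⌊(N:ℝ) * α⌋.toNat, ⟨by omega, by rwa [Int.toNat_of_nonneg h0]⟩, by rw [Int.toNat_of_nonneg h0], h2⟩
  · rintro ⟨k, ⟨h1, h2⟩, h3, h4⟩
    refine ⟨⟨h3 ▸ h2, h4⟩, ?_⟩
    rw [aux_fiber _ _ hN] at h3
    have h5 : (k:ℝ) + 1 ≤ N := by exact_mod_cast h1
    refine ⟨le_trans (by positivity) h3.1, lt_of_lt_of_le h3.2 ?_⟩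
    rw [div_le_one hN']; exact h5

theorem aux_vol (N : ℕ) (hN : 0 < N) (P : ℝ → Prop) (D : Set ℤ) [DecidablePred (· ∈ D)]
    (hP : MeasurableSet {α | P α}) (c : ENNReal)
    (hc : ∀ k : ℕ, volume {α | ⌊(N:ℝ) * α⌋ = (k:ℤ) ∧ P α} = c) :
    volume.restrict (Set.Ico (0:ℝ) 1) {α : ℝ | ⌊(N:ℝ) * α⌋ ∈ D ∧ P α} =
    ((range N).filter (fun k : ℕ => (k:ℤ) ∈ D)).card * c := by
  have hms : MeasurableSet {α : ℝ | ⌊(N:ℝ) * α⌋ ∈ D ∧ P α} := (aux_meas_floor N D).inter hP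
  rw [Measure.restrict_apply hms, aux_restr N hN,
    measure_biUnion_finset]
  · simp [hc]
  · intro i _ j _ hij
    refine Set.disjoint_left.2 fun x hx hy => hij ?_
    exact_mod_cast hx.1.symm.trans hy.1
  · intro k _
    exact (aux_meas_floor N {(k:ℤ)}).inter hP

theorem aux_step (r : ℕ) (hr : 0 < r) (b : ℕ) (hb : b < r) (m : ℕ) (D : Set ℤ) :
    volume.restrict (Set.Ico (0:ℝ) 1) ({α : ℝ | ⌊((r^m:ℕ):ℝ) * α⌋ ∈ D} ∩ {α | digit r α (m+1) = b}) =
    volume.restrict (Set.Ico (0:ℝ) 1) {α : ℝ | ⌊((r^m:ℕ):ℝ) * α⌋ ∈ D} * ENNReal.ofReal (1/r) := by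
  classical
  have hN : 0 < r^m := by positivity
  have h1 := aux_vol (r^m) hN (fun α => digit r α (m+1) = b) D (aux_meas _ _ _)
    (ENNReal.ofReal (1/((r^m*r:ℕ):ℝ))) (by
      intro k
      have : {α | ⌊((r^m:ℕ):ℝ) * α⌋ = (k:ℤ) ∧ digit r α (m+1) = b} = _ :=
        Set.ext (aux_digit r hr b hb m k)
      rw [this, Real.volume_Ico]
      congr 1; ring)
  have h2 := aux_vol (r^m) hN (fun α => True) D (by simp)
    (ENNReal.ofReal (1/((r^m:ℕ):ℝ))) (by
      intro k
      simp only [and_true]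
      have : {α | ⌊((r^m:ℕ):ℝ) * α⌋ = (k:ℤ)} = _ :=
        Set.ext (aux_fiber (r^m) k hN)
      rw [this, Real.volume_Ico]
      congr 1; ring)
  simp only [and_true] at h2
  rw [h2, mul_assoc, ← ENNReal.ofReal_mul (by positivity)]
  rw [← Set.ofPred_and, h1]
  congr 2
  push_cast; field_simp

instance aux_prob : IsProbabilityMeasure (volume.restrict (Set.Ico (0:ℝ) 1)) :=
  ⟨by simp⟩

theorem aux_one (r : ℕ) (hr : 0 < r) (b : ℕ) (hb : b < r) (m : ℕ) :
    volume.restrict (Set.Ico (0:ℝ) 1) {α | digit r α (m+1) = b} = ENNReal.ofReal (1/r) := by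
  have := aux_step r hr b hb m Set.univ
  simpa only [Set.mem_univ, Set.ofPred_true, Set.univ_inter, measure_univ, one_mul] using this

theorem aux_two (r : ℕ) (hr : 0 < r) (b : ℕ) (hb : b < r) (i m : ℕ) (h : i < m) :
    volume.restrict (Set.Ico (0:ℝ) 1) ({α | digit r α (i+1) = b} ∩ {α | digit r α (m+1) = b}) =
    volume.restrict (Set.Ico (0:ℝ) 1) {α | digit r α (i+1) = b} *
    volume.restrict (Set.Ico (0:ℝ) 1) {α | digit r α (m+1) = b} := by
  have := aux_step r hr b hb m {z | (z / ((r^(m-(i+1)) : ℕ):ℤ)) % r = b}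
  rw [aux_one r hr b hb m]
  have e : {α : ℝ | digit r α (i+1) = b} =
      {α : ℝ | ⌊((r^m:ℕ):ℝ) * α⌋ ∈ {z : ℤ | (z / ((r^(m-(i+1)) : ℕ):ℤ)) % r = b}} := by
    ext α
    have h1 := aux_div (r^(i+1)) (r^(m-(i+1))) (by positivity) α
    rw [← pow_add, show i+1+(m-(i+1)) = m by omega] at h1
    simp only [Set.mem_ofPred_eq]
    rw [← h1, digit]; push_cast; rfl
  rw [e, this]

/-- The set of numbers in `Set.Ico 0 1` whose frequency of the digit `b` deviates from
`1 / r` by at least `ε` for infinitely many `n` is a null set. -/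
theorem measure_infinitely_often_deviation (r : ℕ) (hr : 2 ≤ r) (b : ℕ) (hb : b < r)
    (ε : ℝ) (hε : 0 < ε) :
    volume {α : ℝ | α ∈ Set.Ico (0 : ℝ) 1 ∧
        ∃ᶠ n : ℕ in atTop, ε ≤ |(digitCount r b n α : ℝ) / n - 1 / r|} = 0 := by
  have hr0 : 0 < r := by omega
  have hm := aux_meas r b
  have slln := ProbabilityTheory.strong_law_ae_real (μ := volume.restrict (Set.Ico (0:ℝ) 1))
    (fun i => {α | digit r α (i+1) = b}.indicator (fun _ => (1:ℝ)))
    ((integrable_const 1).indicator (hm _))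
    (by
      intro i j hij
      refine aux_indep (hm _) (hm _) ?_
      rcases lt_or_gt_of_ne hij with h | h
      · exact aux_two r hr0 b hb i j h
      · rw [Set.inter_comm, mul_comm]
        exact aux_two r hr0 b hb j i h)
    (fun i => aux_ident (hm _) (hm _) (by rw [aux_one r hr0 b hb, aux_one r hr0 b hb]))
  have hE : ∫ α, {α | digit r α (0+1) = b}.indicator (fun _ => (1:ℝ)) α
      ∂(volume.restrict (Set.Ico (0:ℝ) 1)) = 1 / r := by
    rw [integral_indicator_const _ (hm _), Measure.real, aux_one r hr0 b hb,
      ENNReal.toReal_ofReal (by positivity)]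
    simp
  rw [hE, ae_restrict_iff' measurableSet_Ico, ae_iff] at slln
  refine measure_mono_null ?_ slln
  rintro α ⟨hα, hf⟩ hcon
  have hc : ∀ n, (digitCount r b n α : ℝ) =
      ∑ i ∈ range n, {α | digit r α (i+1) = b}.indicator (fun _ => (1:ℝ)) α := by
    intro n
    have : Finset.Icc 1 n = (range n).image (· + 1) := by
      ext x; simp only [Finset.mem_Icc, Finset.mem_image, Finset.mem_range]
      exact ⟨fun h => ⟨x - 1, by omega, by omega⟩, by rintro ⟨y, h, rfl⟩; omega⟩
    rw [digitCount, Finset.card_filter, this, Finset.sum_image (by simp)]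
    simp [Set.indicator_apply]
  have ht := hcon hα
  simp only [← hc] at ht
  have := (Metric.tendsto_nhds.1 ht) ε hε
  refine hf (this.mono fun n hn => ?_)
  rw [Real.dist_eq] at hn
  exact not_le.2 hn
end

section
/- Let r ≥ 2 be an integer and b ∈ {0,…,r−1} a digit. The set M_b of all α ∈ [0,1) for which the relative frequency p_{b,n,α,r}/n does not converge to 1/r as n → ∞ is a Lebesgue null set. -/
open MeasureTheory Filter Finset

open ProbabilityTheory

lemma comap_indicator_le {Ω : Type*} (s : Set Ω) :
    MeasurableSpace.comap (s.indicator (fun _ => (1 : ℝ))) inferInstance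
      ≤ MeasurableSpace.generateFrom {s} := by
  rintro t ⟨u, _, rfl⟩
  have hs : MeasurableSet[MeasurableSpace.generateFrom {s}] s :=
    MeasurableSpace.measurableSet_generateFrom rfl
  obtain h | h | h | h := Set.indicator_const_preimage s u (1 : ℝ)
  · rw [h]; exact MeasurableSet.univ
  · rw [h]; exact hs
  · rw [h]; exact hs.compl
  · rw [Set.mem_singleton_iff] at h
    rw [h]; exact @MeasurableSet.empty _ (MeasurableSpace.generateFrom {s})

lemma slln_events {Ω : Type*} [MeasurableSpace Ω] (μ : Measure Ω) [IsProbabilityMeasure μ]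
    (A : ℕ → Set Ω) (hA : ∀ i, MeasurableSet (A i)) (p : ℝ) (h1 : ∀ i, μ.real (A i) = p)
    (h2 : ∀ i j, i < j → μ.real (A i ∩ A j) = p * p) :
    ∀ᵐ ω ∂μ, Tendsto (fun n : ℕ =>
      (∑ i ∈ range n, (A i).indicator (fun _ => (1 : ℝ)) ω) / n) atTop (nhds p) := by
  have hm : ∀ i, Measurable ((A i).indicator (fun _ => (1 : ℝ))) := fun i =>
    measurable_const.indicator (hA i)
  have hE : μ[(A 0).indicator (fun _ => (1 : ℝ))] = p := by
    rw [integral_indicator_const _ (hA 0), h1]; simp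
  have hind : ∀ i j, i < j → IndepFun ((A i).indicator (fun _ => (1 : ℝ)))
      ((A j).indicator (fun _ => (1 : ℝ))) μ := by
    intro i j hij
    have hS : IndepSet (A i) (A j) μ := by
      rw [indepSet_iff_measure_inter_eq_mul (hA i) (hA j) (μ := μ)]
      rw [← ENNReal.toReal_eq_toReal_iff' (measure_ne_top _ _)
        (ENNReal.mul_ne_top (measure_ne_top _ _) (measure_ne_top _ _)), ENNReal.toReal_mul]
      change μ.real _ = μ.real _ * μ.real _
      rw [h2 i j hij, h1, h1]
    rw [IndepSet_iff_Indep] at hS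
    rw [IndepFun_iff_Indep]
    exact indep_of_indep_of_le_left (indep_of_indep_of_le_right hS (comap_indicator_le _))
      (comap_indicator_le _)
  have key := strong_law_ae_real (μ := μ) (fun i => (A i).indicator (fun _ => (1 : ℝ)))
    ((integrable_const (1 : ℝ)).indicator (hA 0)) (by
      intro i j hij
      rcases lt_or_gt_of_ne hij with h | h
      · exact hind i j h
      · exact (hind j i h).symm) (by
      intro i
      refine ⟨(hm i).aemeasurable, (hm 0).aemeasurable, ?_⟩
      have h10 : μ (A i) = μ (A 0) := by
        rw [← ENNReal.toReal_eq_toReal_iff' (measure_ne_top _ _) (measure_ne_top _ _)]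
        exact (h1 i).trans (h1 0).symm
      ext u hu
      rw [Measure.map_apply (hm i) hu, Measure.map_apply (hm 0) hu]
      classical
      simp only [Set.indicator_const_preimage_eq_union]
      split_ifs <;> simp [h10, measure_compl, hA, measure_ne_top])
  simpa only [hE] using key

/-- Numbers whose first digit is `b`. -/
def digA (r b : ℕ) : Set ℝ := {x | ⌊(r : ℝ) * x⌋ % (r : ℤ) = (b : ℤ)}

lemma digA_meas (r b : ℕ) : MeasurableSet (digA r b) := by
  have : Measurable (fun x : ℝ => ⌊(r : ℝ) * x⌋) := Int.measurable_floor.comp (by fun_prop)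
  exact this (MeasurableSet.of_discrete (s := {z : ℤ | z % (r : ℤ) = (b : ℤ)}))

lemma digA_add (r b : ℕ) (x : ℝ) (n : ℕ) : x + n ∈ digA r b ↔ x ∈ digA r b := by
  have : (r : ℝ) * (x + n) = r * x + ((r * n : ℤ) : ℝ) := by push_cast; ring
  simp only [digA, Set.mem_ofPred_eq, this, Int.floor_add_intCast, Int.add_mul_emod_self_left]

lemma digA_inter (r b : ℕ) (hb : b < r) :
    Set.Ico (0 : ℝ) 1 ∩ digA r b = Set.Ico ((b : ℝ) / r) ((b : ℝ) / r + 1 / r) := by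
  have hr0 : (0 : ℝ) < r := by exact_mod_cast (by omega : 0 < r)
  have hb1 : (b : ℝ) + 1 ≤ r := by exact_mod_cast hb
  ext x
  have e : x ∈ Set.Ico ((b : ℝ) / r) ((b : ℝ) / r + 1 / r) ↔ ⌊(r : ℝ) * x⌋ = (b : ℤ) := by
    rw [Int.floor_eq_iff, ← add_div, Set.mem_Ico, div_le_iff₀ hr0, lt_div_iff₀ hr0, mul_comm x]
    push_cast; rfl
  rw [e]
  simp only [digA, Set.mem_inter_iff, Set.mem_Ico, Set.mem_ofPred_eq]
  constructor
  · rintro ⟨⟨h0, h1⟩, h⟩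
    rwa [Int.emod_eq_of_lt] at h
    · exact Int.floor_nonneg.2 (by positivity)
    · rw [Int.floor_lt]; push_cast; nlinarith
  · intro h
    refine ⟨?_, ?_⟩
    · rw [Int.floor_eq_iff] at h
      push_cast at h
      constructor
      · by_contra hx
        have : (0 : ℝ) ≤ b := by positivity
        nlinarith
      · nlinarith
    · rw [h]; exact Int.emod_eq_of_lt (by positivity) (by exact_mod_cast hb)

/-- Periodic set, stretched integral. -/
lemma periodic_int (T : Set ℝ) (hT : MeasurableSet T) (hp : ∀ x, x + 1 ∈ T ↔ x ∈ T)
    (a : ℝ) (n : ℕ) :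
    ∫ x in a..a + n, T.indicator (fun _ => (1 : ℝ)) x = n * volume.real (Set.Ico (0 : ℝ) 1 ∩ T) := by
  have hper : Function.Periodic (T.indicator (fun _ => (1 : ℝ))) 1 := by
    intro x
    by_cases h : x ∈ T
    · rw [Set.indicator_of_mem h, Set.indicator_of_mem ((hp x).2 h)]
    · rw [Set.indicator_of_notMem h, Set.indicator_of_notMem (fun h' => h ((hp x).1 h'))]
  have hint : ∀ t₁ t₂, IntervalIntegrable (T.indicator (fun _ => (1 : ℝ))) volume t₁ t₂ := by
    intro t₁ t₂
    rw [intervalIntegrable_iff]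
    have : IntegrableOn (fun _ : ℝ => (1 : ℝ)) (Set.uIoc t₁ t₂) volume := by
      rw [← intervalIntegrable_iff]; exact intervalIntegrable_const
    exact this.indicator hT
  have := hper.intervalIntegral_add_zsmul_eq n a hint
  simp only [zsmul_eq_mul, mul_one, Int.cast_natCast] at this
  rw [this, hper.intervalIntegral_add_eq a 0, zero_add,
    intervalIntegral.integral_of_le zero_le_one, ← integral_Ico_eq_integral_Ioc,
    integral_indicator_const _ hT, measureReal_restrict_apply hT, Set.inter_comm]
  simp

lemma stretch (T : Set ℝ) (hT : MeasurableSet T) (hp : ∀ x, x + 1 ∈ T ↔ x ∈ T)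
    (a l : ℝ) (hl : 0 ≤ l) (N n : ℕ) (hN : 0 < N) (h : (N : ℝ) * l = n) :
    volume.real (Set.Ico a (a + l) ∩ {x | (N : ℝ) * x ∈ T})
      = l * volume.real (Set.Ico (0 : ℝ) 1 ∩ T) := by
  have hN' : (N : ℝ) ≠ 0 := by positivity
  have hm : MeasurableSet {x : ℝ | (N : ℝ) * x ∈ T} :=
    (by fun_prop : Measurable (fun x : ℝ => (N : ℝ) * x)) hT
  have e1 : volume.real (Set.Ico a (a + l) ∩ {x | (N : ℝ) * x ∈ T})
      = ∫ x in a..a + l, T.indicator (fun _ => (1 : ℝ)) (N * x) := by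
    rw [intervalIntegral.integral_of_le (by linarith), ← integral_Ico_eq_integral_Ioc]
    change _ = ∫ x in _, {x : ℝ | (N : ℝ) * x ∈ T}.indicator (fun _ => (1 : ℝ)) x
    rw [integral_indicator_const _ hm, measureReal_restrict_apply hm, Set.inter_comm]
    simp
  rw [e1, intervalIntegral.integral_comp_mul_left _ hN', mul_add, h, periodic_int T hT hp,
    ← h, smul_eq_mul]
  field_simp

/-- The set of numbers in `Set.Ico 0 1` for which the frequency of the digit `b` does
not converge to `1 / r` is a null set. -/
theorem measure_not_tendsto (r : ℕ) (hr : 2 ≤ r) (b : ℕ) (hb : b < r) :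
    volume {α : ℝ | α ∈ Set.Ico (0 : ℝ) 1 ∧
        ¬ Tendsto (fun n : ℕ => (digitCount r b n α : ℝ) / n) atTop (nhds (1 / r))} = 0 := by
  have hr0 : (0 : ℝ) < r := by exact_mod_cast (by omega : 0 < r)
  set A : ℕ → Set ℝ := fun i => {x | ((r ^ i : ℕ) : ℝ) * x ∈ digA r b} with hAdef
  have hA : ∀ i, MeasurableSet (A i) := fun i =>
    (by fun_prop : Measurable (fun x : ℝ => ((r ^ i : ℕ) : ℝ) * x)) (digA_meas r b)
  have hmem : ∀ i x, x ∈ A i ↔ digit r x (i + 1) = b := by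
    intro i x
    simp only [hAdef, digA, digit, Set.mem_ofPred_eq]
    rw [show (r : ℝ) * (((r ^ i : ℕ) : ℝ) * x) = (r : ℝ) ^ (i + 1) * x by push_cast; ring]
  have hbase : volume.real (Set.Ico (0 : ℝ) 1 ∩ digA r b) = 1 / r := by
    rw [digA_inter r b hb, Real.volume_real_Ico_of_le (by simp)]; ring
  have hper : ∀ x, x + 1 ∈ digA r b ↔ x ∈ digA r b := fun x => by
    simpa using digA_add r b x 1
  have : IsProbabilityMeasure (volume.restrict (Set.Ico (0 : ℝ) 1)) := ⟨by simp⟩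
  have hpos : ∀ i, 0 < r ^ i := fun i => Nat.pow_pos (by omega)
  have key := slln_events (volume.restrict (Set.Ico (0 : ℝ) 1)) A hA (1 / r) (by
      intro i
      rw [measureReal_restrict_apply (hA i), Set.inter_comm]
      have := stretch _ (digA_meas r b) hper 0 1 zero_le_one (r ^ i) (r ^ i) (hpos i) (by simp)
      rw [zero_add, one_mul, hbase] at this
      exact this) (by
      intro i j hij
      obtain ⟨k, rfl⟩ : ∃ k, j = i + (k + 1) := ⟨j - i - 1, by omega⟩
      rw [measureReal_restrict_apply ((hA _).inter (hA _)), Set.inter_comm]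
      have hp2 : ∀ x, x + 1 ∈ digA r b ∩ A (k + 1) ↔ x ∈ digA r b ∩ A (k + 1) := by
        intro x
        have : ((r ^ (k + 1) : ℕ) : ℝ) * (x + 1) = ((r ^ (k + 1) : ℕ) : ℝ) * x
          + ((r ^ (k + 1) : ℕ) : ℝ) := by ring
        simp only [Set.mem_inter_iff, hper, hAdef, Set.mem_ofPred_eq, this, digA_add]
      have h1 := stretch _ ((digA_meas r b).inter (hA (k + 1))) hp2 0 1 zero_le_one
        (r ^ i) (r ^ i) (hpos i) (by simp)
      have h2 := stretch _ (digA_meas r b) hper (b / r) (1 / r) (by positivity)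
        (r ^ (k + 1)) (r ^ k) (hpos _) (by push_cast; field_simp; ring)
      rw [← digA_inter r b hb, Set.inter_assoc, hbase] at h2
      rw [zero_add, one_mul] at h1
      rw [← h2]
      refine Eq.trans ?_ h1
      congr 2
      ext x
      simp only [hAdef, Set.mem_inter_iff, Set.mem_ofPred_eq]
      rw [show ((r ^ (k + 1) : ℕ) : ℝ) * (((r ^ i : ℕ) : ℝ) * x)
        = ((r ^ (i + (k + 1)) : ℕ) : ℝ) * x by push_cast; ring])
  rw [ae_restrict_iff' measurableSet_Ico, ae_iff] at key
  refine measure_mono_null ?_ key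
  rintro x ⟨hx, hnt⟩ h
  refine hnt ((h hx).congr fun n => ?_)
  congr 1
  classical
  have : digitCount r b n x = ((range n).filter (fun i => x ∈ A i)).card := by
    rw [digitCount]
    symm
    refine Finset.card_bij (fun i _ => i + 1) ?_ ?_ ?_
    · intro i hi
      simp only [Finset.mem_filter, Finset.mem_range, hmem, Finset.mem_Icc] at hi ⊢
      exact ⟨by omega, hi.2⟩
    · intro i _ j _ h; omega
    · intro j hj
      simp only [Finset.mem_filter, Finset.mem_Icc] at hj
      refine ⟨j - 1, ?_, by omega⟩
      simp only [Finset.mem_filter, Finset.mem_range, hmem]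
      exact ⟨by omega, by rw [Nat.sub_add_cancel hj.1.1]; exact hj.2⟩
  rw [this, Finset.card_filter]
  push_cast
  refine Finset.sum_congr rfl fun i _ => ?_
  simp [Set.indicator_apply]
end

section
/- For every integer r ≥ 2, the set of all real numbers α ≥ 0 (not restricted to [0,1)) that are not simply normal in base r is a Lebesgue null set. -/
open MeasureTheory Filter Finset

lemma per_unit (C : Set ℝ) (hC : ∀ (x : ℝ) (k : ℤ), x + k ∈ C ↔ x ∈ C) (a : ℤ) :
    volume (C ∩ Set.Ico (a:ℝ) (a+1)) = volume (C ∩ Set.Ico (0:ℝ) 1) := by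
  rw [← measure_preimage_add_right volume (a:ℝ) (C ∩ Set.Ico (a:ℝ) (a+1))]
  congr 1
  ext x
  simp only [Set.mem_preimage, Set.mem_inter_iff, hC, Set.mem_Ico]
  constructor <;> rintro ⟨h, h1, h2⟩ <;> refine ⟨h, ?_, ?_⟩ <;> linarith

lemma per_nat_s11 (C : Set ℝ) (hC : ∀ (x : ℝ) (k : ℤ), x + k ∈ C ↔ x ∈ C) (a : ℤ) (N : ℕ) :
    volume (C ∩ Set.Ico (a:ℝ) (a+N)) = N * volume (C ∩ Set.Ico (0:ℝ) 1) := by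
  induction N with
  | zero => simp
  | succ n ih =>
    have hn : (0:ℝ) ≤ n := Nat.cast_nonneg n
    rw [← measure_inter_add_sdiff (C ∩ Set.Ico (a:ℝ) (a+(n+1:ℕ)))
      (measurableSet_Ico (a := (a:ℝ)) (b := (a:ℝ)+n))]
    have h1 : C ∩ Set.Ico (a:ℝ) (a+(n+1:ℕ)) ∩ Set.Ico (a:ℝ) (a+n) = C ∩ Set.Ico (a:ℝ) (a+n) := by
      ext x
      simp only [Set.mem_inter_iff, Set.mem_Ico]
      push_cast
      constructor
      · rintro ⟨⟨h, -⟩, h'⟩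
        exact ⟨h, h'⟩
      · rintro ⟨h, h', h''⟩
        exact ⟨⟨h, h', by linarith⟩, h', h''⟩
    have h2 : (C ∩ Set.Ico (a:ℝ) (a+(n+1:ℕ))) \ Set.Ico (a:ℝ) (a+n) =
        C ∩ Set.Ico (((a+n : ℤ):ℝ)) ((a+n:ℤ)+1) := by
      ext x
      simp only [Set.mem_inter_iff, Set.mem_Ico, Set.mem_sdiff, not_and, not_lt]
      push_cast
      constructor
      · rintro ⟨⟨h, h3, h4⟩, h'⟩
        exact ⟨h, h' h3, by linarith⟩
      · rintro ⟨h, h', h''⟩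
        exact ⟨⟨h, by linarith, by linarith⟩, fun _ => h'⟩
    rw [h1, h2, ih, per_unit C hC]
    push_cast
    ring

lemma scale_vol (C : Set ℝ) (N : ℕ) (hN : 0 < N) (a b : ℝ) :
    volume ((fun x : ℝ => (N:ℝ) * x) ⁻¹' C ∩ Set.Ico a b) =
      (N:ENNReal)⁻¹ * volume (C ∩ Set.Ico (N * a) (N * b)) := by
  have hN' : (0:ℝ) < N := by exact_mod_cast hN
  have : (fun x : ℝ => (N:ℝ) * x) ⁻¹' C ∩ Set.Ico a b =
      (fun x : ℝ => (N:ℝ) * x) ⁻¹' (C ∩ Set.Ico (N * a) (N * b)) := by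
    ext x
    simp only [Set.mem_inter_iff, Set.mem_preimage, Set.mem_Ico, mul_le_mul_iff_right₀ hN',
      mul_lt_mul_iff_right₀ hN']
  rw [this, Real.volume_preimage_mul_left hN'.ne', abs_of_pos (inv_pos.2 hN'),
    ENNReal.ofReal_inv_of_pos hN', ENNReal.ofReal_natCast]

lemma per_scale_s11 (C : Set ℝ) (hC : ∀ (x : ℝ) (k : ℤ), x + k ∈ C ↔ x ∈ C) (N : ℕ) (hN : 0 < N) :
    volume ((fun x : ℝ => (N:ℝ) * x) ⁻¹' C ∩ Set.Ico 0 1) = volume (C ∩ Set.Ico (0:ℝ) 1) := by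
  rw [scale_vol C N hN]
  have := per_nat_s11 C hC 0 N
  simp only [Int.cast_zero, zero_add] at this
  rw [mul_zero, mul_one, this, ← mul_assoc, ENNReal.inv_mul_cancel, one_mul]
  · exact_mod_cast hN.ne'
  · simp

def DS (r b j : ℕ) : Set ℝ := {x | digit r x j = (b:ℤ)}

lemma DS_meas (r b j : ℕ) : MeasurableSet (DS r b j) := by
  have h : Measurable (fun x : ℝ => ⌊(r : ℝ) ^ j * x⌋) := (measurable_const_mul _).floor
  have h2 : Measurable (fun z : ℤ => z % (r:ℤ)) := measurable_of_countable _
  exact (h2.comp h) (measurableSet_singleton (b:ℤ))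

lemma DS_per (r b j : ℕ) (x : ℝ) (k : ℤ) : x + k ∈ DS r b (j+1) ↔ x ∈ DS r b (j+1) := by
  have : (r:ℝ)^(j+1) * (x + k) = (r:ℝ)^(j+1) * x + ((r * (r^j * k) : ℤ) : ℝ) := by
    push_cast; ring
  simp only [DS, digit, Set.mem_ofPred_eq, this, Int.floor_add_intCast, Int.add_mul_emod_self_left]

lemma DS_shift (r b s j : ℕ) :
    DS r b (s + j) = (fun x : ℝ => ((r^s : ℕ) : ℝ) * x) ⁻¹' DS r b j := by
  ext x
  simp only [DS, digit, Set.mem_ofPred_eq, Set.mem_preimage]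
  push_cast
  rw [← mul_assoc, ← pow_add, add_comm s j]

lemma DS_zero (r b : ℕ) (hb : b < r) :
    DS r b 0 ∩ Set.Ico (0:ℝ) r = Set.Ico (b:ℝ) (b+1) := by
  have hb' : (b:ℝ) + 1 ≤ r := by exact_mod_cast hb
  ext x
  simp only [DS, digit, Set.mem_ofPred_eq, Set.mem_inter_iff, Set.mem_Ico, pow_zero, one_mul]
  constructor
  · rintro ⟨h, h0, h1⟩
    rw [Int.emod_eq_of_lt (Int.floor_nonneg.2 h0) (Int.floor_lt.2 (by simpa using h1))] at h
    simpa using Int.floor_eq_iff.1 h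
  · rintro ⟨h0, h1⟩
    have h : ⌊x⌋ = (b:ℤ) := Int.floor_eq_iff.2 (by simpa using ⟨h0, h1⟩)
    refine ⟨?_, (Nat.cast_nonneg b).trans h0, by linarith⟩
    rw [h, Int.emod_eq_of_lt] <;> omega

lemma DS_one_inter (r b : ℕ) (hb : b < r) (C : Set ℝ)
    (hC : ∀ (x : ℝ) (k : ℤ), x + k ∈ C ↔ x ∈ C) :
    volume (DS r b 1 ∩ (fun x : ℝ => (r:ℝ) * x) ⁻¹' C ∩ Set.Ico (0:ℝ) 1) =
      (r:ENNReal)⁻¹ * volume (C ∩ Set.Ico (0:ℝ) 1) := by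
  have h := DS_shift r b 1 0
  simp only [pow_one, add_zero] at h
  rw [h, ← Set.preimage_inter, scale_vol _ r (by omega), mul_zero, mul_one, Set.inter_right_comm,
    DS_zero r b hb, Set.inter_comm]
  congr 1
  simpa using per_unit C hC b

lemma DS_vol (r b j : ℕ) (hb : b < r) :
    volume (DS r b (j+1) ∩ Set.Ico (0:ℝ) 1) = (r:ENNReal)⁻¹ := by
  rw [DS_shift, per_scale_s11 _ (DS_per r b 0) _ (Nat.pow_pos (by omega))]
  simpa using DS_one_inter r b hb Set.univ (by simp)

lemma DS_vol2 (r b i k : ℕ) (hb : b < r) :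
    volume (DS r b (i+1) ∩ DS r b (i+1+(k+1)) ∩ Set.Ico (0:ℝ) 1) = (r:ENNReal)⁻¹ * (r:ENNReal)⁻¹ := by
  rw [add_assoc, DS_shift r b i, DS_shift r b i (1+(k+1)), ← Set.preimage_inter, per_scale_s11 _ _ _ (Nat.pow_pos (by omega))]
  · have := DS_one_inter r b hb (DS r b (k+1)) (DS_per r b k)
    rw [DS_vol r b k hb] at this
    rw [DS_shift r b 1 (k+1), pow_one, this]
  · intro x k'
    have h1 := DS_per r b 0 x k'
    have h2 := DS_per r b (k+1) x k'
    rw [add_comm 1 (k+1)]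
    simp only [Set.mem_inter_iff, h1, h2]

open ProbabilityTheory in
lemma slln_unit (r b : ℕ) (hb : b < r) (a : ℤ) :
    ∀ᵐ x ∂(volume.restrict (Set.Ico (a:ℝ) (a+1))),
      Tendsto (fun n : ℕ => (digitCount r b n x : ℝ) / n) atTop (nhds (1 / r)) := by
  set μ : Measure ℝ := volume.restrict (Set.Ico (a:ℝ) (a+1)) with hμ
  have : IsProbabilityMeasure μ := ⟨by simp [hμ]⟩
  have m1 : ∀ i, μ (DS r b (i+1)) = (r:ENNReal)⁻¹ := fun i => by
    rw [hμ, Measure.restrict_apply (DS_meas _ _ _), per_unit _ (DS_per r b i), DS_vol r b i hb]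
  have m2 : ∀ i k, μ (DS r b (i+1) ∩ DS r b (i+1+(k+1))) = (r:ENNReal)⁻¹ * (r:ENNReal)⁻¹ := fun i k => by
    rw [hμ, Measure.restrict_apply ((DS_meas _ _ _).inter (DS_meas _ _ _)), per_unit, DS_vol2 r b i k hb]
    intro x k'
    have h2 := DS_per r b (i+1+k) x k'
    simp only [Set.mem_inter_iff, DS_per r b i x k']
    rw [← add_assoc, h2]
  have m3 : ∀ i, μ (DS r b (i+1))ᶜ = 1 - (r:ENNReal)⁻¹ := fun i => by
    rw [prob_compl_eq_one_sub (DS_meas _ _ _), m1]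
  have m10 := m1 0
  have m30 := m3 0
  rw [zero_add] at m10 m30
  have indS : ∀ i j, i < j → IndepSet (DS r b (i+1)) (DS r b (j+1)) μ := by
    intro i j hij
    rw [indepSet_iff_measure_inter_eq_mul (DS_meas _ _ _) (DS_meas _ _ _) μ, m1, m1]
    obtain ⟨k, rfl⟩ := Nat.exists_eq_add_of_lt hij
    rw [← m2 i k]
    congr 3
    omega
  let X : ℕ → ℝ → ℝ := fun i => (DS r b (i+1)).indicator (fun _ => (1:ℝ))
  have Xm : ∀ i, Measurable (X i) := fun i => measurable_const.indicator (DS_meas _ _ _)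
  have indF : ∀ i j, i < j → IndepFun (X i) (X j) μ := by
    intro i j hij
    have hle : ∀ i, MeasurableSpace.comap (X i) inferInstance ≤
        MeasurableSpace.generateFrom {DS r b (i+1)} := fun i => by
      rw [← measurable_iff_comap_le]
      exact Measurable.indicator measurable_const
        (MeasurableSpace.measurableSet_generateFrom (Set.mem_singleton _))
    rw [IndepFun_iff_Indep]
    have h := (IndepSet_iff_Indep _ _ _).1 (indS i j hij)
    exact indep_of_indep_of_le_left (indep_of_indep_of_le_right h (hle j)) (hle i)
  have key := strong_law_ae_real (μ := μ) X ?_ ?_ ?_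
  · filter_upwards [key] with x hx
    have e : (∫ x, X 0 x ∂μ) = 1 / (r:ℝ) := by
      simp only [X]
      rw [integral_indicator_const _ (DS_meas _ _ _), measureReal_def, m1]
      simp
    rw [e] at hx
    refine hx.congr fun n => ?_
    congr 1
    rw [digitCount, Finset.card_filter, Nat.cast_sum, Finset.range_eq_Ico,
      Finset.sum_Ico_add' (fun i => (DS r b i).indicator (fun _ => (1:ℝ)) x) 0 n 1]
    apply Finset.sum_congr
    · ext; simp
    · intro j _
      simp [DS, Set.indicator_apply]
  · exact (integrable_const (1:ℝ)).indicator (DS_meas _ _ _)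
  · intro i j hij
    rcases lt_or_gt_of_ne hij with h | h
    · exact indF i j h
    · exact (indF j i h).symm
  · intro i
    refine ⟨(Xm i).aemeasurable, (Xm 0).aemeasurable, ?_⟩
    ext s hs
    rw [Measure.map_apply (Xm i) hs, Measure.map_apply (Xm 0) hs]
    classical
    simp only [X, Set.indicator_const_preimage_eq_union]
    by_cases h1 : (1:ℝ) ∈ s <;> by_cases h0 : (0:ℝ) ∈ s <;>
      simp [h1, h0, m1, m3, m10, m30]

/-- The set of all nonnegative reals that are not simply normal in base `r` is null. -/
theorem almost_all_nonneg_simply_normal (r : ℕ) (hr : 2 ≤ r) :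
    volume {α : ℝ | 0 ≤ α ∧ ¬ SimplyNormal r α} = 0 := by
  have h : ∀ᵐ x : ℝ, SimplyNormal r x := by
    rw [← Measure.restrict_univ (μ := (volume : Measure ℝ)), ← iUnion_Ico_intCast ℝ, ae_restrict_iUnion_iff]
    intro a
    simp only [SimplyNormal]
    rw [ae_all_iff]
    intro b
    by_cases hb : b < r
    · filter_upwards [slln_unit r b hb a] with x hx _ using hx
    · exact Eventually.of_forall fun x h => absurd h hb
  exact measure_mono_null (fun x hx => hx.2) (ae_iff.1 h)
end

section
/- For every integer r ≥ 2, the set of real numbers α ∈ [0,1) such that r^m·α fails to be simply normal in base r for at least one integer m ≥ 0 is a Lebesgue null set. -/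
open MeasureTheory Filter Finset

/-- the base `r` shift map -/
noncomputable def shiftT (r : ℕ) (x : ℝ) : ℝ := Int.fract ((r : ℝ) * x)

lemma shiftT_measurable (r : ℕ) : Measurable (shiftT r) := by
  unfold shiftT; fun_prop

/-- Lebesgue measure on the unit interval -/
noncomputable def unitM : Measure ℝ := volume.restrict (Set.Ico (0 : ℝ) 1)

instance unitM_prob : IsProbabilityMeasure unitM :=
  ⟨by simp [unitM]⟩

lemma digit_meas_s12 (r : ℕ) (b k : ℕ) : MeasurableSet {x : ℝ | digit r x k = (b : ℤ)} := by
  have h : Measurable fun x : ℝ => ⌊(r : ℝ) ^ k * x⌋ := by fun_prop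
  have h2 : Measurable fun z : ℤ => z % (r : ℤ) := measurable_of_countable _
  exact (h2.comp h) (measurableSet_singleton (b : ℤ))

lemma digit_shift_s12 (r : ℕ) (x : ℝ) (k : ℕ) :
    digit r (shiftT r x) (k + 1) = digit r x (k + 2) := by
  unfold digit shiftT
  have : (r : ℝ) ^ (k + 1) * Int.fract ((r : ℝ) * x)
      = (r : ℝ) ^ (k + 2) * x - (((r : ℤ) ^ (k + 1) * ⌊(r : ℝ) * x⌋ : ℤ) : ℝ) := by
    rw [Int.fract]; push_cast; ring
  rw [this, Int.floor_sub_intCast]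
  rw [pow_succ' (r : ℤ) k, mul_assoc, Int.sub_mul_emod_self_left]

lemma digit_iter (r : ℕ) (x : ℝ) (k : ℕ) :
    digit r ((shiftT r)^[k] x) 1 = digit r x (k + 1) := by
  induction k generalizing x with
  | zero => rfl
  | succ k ih => rw [Function.iterate_succ_apply, ih, digit_shift_s12]

lemma digit_mul_pow (r : ℕ) (x : ℝ) (m j : ℕ) :
    digit r ((r : ℝ) ^ m * x) j = digit r x (m + j) := by
  unfold digit
  congr 2
  ring

lemma key_cyl (r : ℕ) (hr : 2 ≤ r) (b : ℕ) (hb : b < r) (B : Set ℝ) (hB : MeasurableSet B) :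
    unitM ({x | digit r x 1 = (b : ℤ)} ∩ shiftT r ⁻¹' B) = ENNReal.ofReal (r : ℝ)⁻¹ * unitM B := by
  have hr0 : (0 : ℝ) < r := by exact_mod_cast (by omega : 0 < r)
  unfold unitM
  rw [Measure.restrict_apply ((digit_meas_s12 r b 1).inter (shiftT_measurable r hB)),
    Measure.restrict_apply hB]
  have hset : ({x | digit r x 1 = (b : ℤ)} ∩ shiftT r ⁻¹' B) ∩ Set.Ico (0 : ℝ) 1
      = (fun x => (r : ℝ) * x) ⁻¹' ((fun y => y + (-(b : ℝ))) ⁻¹' (B ∩ Set.Ico (0 : ℝ) 1)) := by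
    ext x
    simp only [Set.mem_inter_iff, Set.mem_ofPred_eq, Set.mem_preimage, Set.mem_Ico, digit, shiftT,
      pow_one]
    have hbr : (b : ℝ) + 1 ≤ r := by exact_mod_cast hb
    constructor
    · rintro ⟨⟨h1, h2⟩, h3, h4⟩
      have h5 : 0 ≤ ⌊(r : ℝ) * x⌋ := Int.floor_nonneg.2 (by positivity)
      have h6 : ⌊(r : ℝ) * x⌋ < r := Int.floor_lt.2 (by push_cast; nlinarith)
      rw [Int.emod_eq_of_lt h5 h6] at h1
      have h7 : (r : ℝ) * x + -(b : ℝ) = Int.fract ((r : ℝ) * x) := by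
        rw [Int.fract, h1]; push_cast; ring
      rw [h7]
      exact ⟨h2, Int.fract_nonneg _, Int.fract_lt_one _⟩
    · rintro ⟨h1, h2, h3⟩
      have hf : ⌊(r : ℝ) * x⌋ = (b : ℤ) := by
        rw [Int.floor_eq_iff]; push_cast; constructor <;> linarith
      have h7 : (r : ℝ) * x + -(b : ℝ) = Int.fract ((r : ℝ) * x) := by
        rw [Int.fract, hf]; push_cast; ring
      refine ⟨⟨?_, h7 ▸ h1⟩, ?_, ?_⟩
      · rw [hf]; exact Int.emod_eq_of_lt (by omega) (by omega)
      · have : (0 : ℝ) ≤ b := by positivity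
        by_contra hx
        nlinarith
      · by_contra hx
        nlinarith
  rw [hset, Real.volume_preimage_mul_left hr0.ne', measure_preimage_add_right,
    abs_of_pos (inv_pos.2 hr0)]

lemma shift_mp (r : ℕ) (hr : 2 ≤ r) : MeasurePreserving (shiftT r) unitM unitM := by
  refine ⟨shiftT_measurable r, ?_⟩
  ext B hB
  rw [Measure.map_apply (shiftT_measurable r) hB]
  have hU : shiftT r ⁻¹' B = ⋃ b ∈ Finset.range r,
      ({x | digit r x 1 = (b : ℤ)} ∩ shiftT r ⁻¹' B) := by
    ext x
    simp only [Set.mem_iUnion, Set.mem_inter_iff, Set.mem_ofPred_eq, Finset.mem_range]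
    constructor
    · intro h
      have h1 : 0 ≤ digit r x 1 := Int.emod_nonneg _ (by omega)
      have h2 : digit r x 1 < r := Int.emod_lt_of_pos _ (by omega)
      exact ⟨(digit r x 1).toNat, by omega, by omega, h⟩
    · rintro ⟨b, _, _, h⟩
      exact h
  rw [hU, measure_biUnion_finset]
  · rw [Finset.sum_congr rfl fun b hb => key_cyl r hr b (Finset.mem_range.1 hb) B hB]
    rw [Finset.sum_const, Finset.card_range, nsmul_eq_mul, ← mul_assoc,
      ← ENNReal.ofReal_natCast r, ← ENNReal.ofReal_mul (by positivity),
      mul_inv_cancel₀ (by positivity), ENNReal.ofReal_one, one_mul]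
  · intro a _ b _ hab
    refine Set.disjoint_left.2 ?_
    rintro x ⟨h1, _⟩ ⟨h2, _⟩
    simp only [Set.mem_ofPred_eq] at h1 h2
    exact hab (by omega)
  · intro b _
    exact (digit_meas_s12 r b 1).inter (shiftT_measurable r hB)

lemma E_meas (r : ℕ) (hr : 2 ≤ r) (b : ℕ) (hb : b < r) (k : ℕ) :
    unitM {x | digit r x (k + 1) = (b : ℤ)} = ENNReal.ofReal (r : ℝ)⁻¹ := by
  have h := ((shift_mp r hr).iterate k).measure_preimage (digit_meas_s12 r b 1).nullMeasurableSet
  have h2 := key_cyl r hr b hb Set.univ MeasurableSet.univ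
  simp only [Set.preimage_univ, Set.inter_univ, measure_univ, mul_one] at h2
  rw [← h2, ← h]
  simp only [Set.preimage_ofPred_eq, digit_iter]

lemma E_indep (r : ℕ) (hr : 2 ≤ r) (b : ℕ) (hb : b < r) (i d : ℕ) :
    unitM ({x | digit r x (i + 1) = (b : ℤ)} ∩ {x | digit r x (i + d + 1 + 1) = (b : ℤ)})
      = ENNReal.ofReal (r : ℝ)⁻¹ * ENNReal.ofReal (r : ℝ)⁻¹ := by
  have h2 := key_cyl r hr b hb _ (digit_meas_s12 r b (d + 1))
  rw [E_meas r hr b hb d] at h2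
  have h := ((shift_mp r hr).iterate i).measure_preimage
    ((digit_meas_s12 r b 1).inter (shiftT_measurable r (digit_meas_s12 r b (d + 1)))).nullMeasurableSet
  rw [← h2, ← h]
  congr 1
  ext x
  simp only [Set.mem_inter_iff, Set.mem_ofPred_eq, Set.mem_preimage, digit_iter]
  have : digit r (shiftT r ((shiftT r)^[i] x)) (d + 1) = digit r x (i + d + 1 + 1) := by
    rw [← digit_iter, ← Function.iterate_succ_apply' (shiftT r) i, ← Function.iterate_add_apply,
      digit_iter]
    congr 1; omega
  rw [this]

lemma ind_meas (s : Set ℝ) :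
    Measurable[MeasurableSpace.generateFrom {s}] (s.indicator (fun _ => (1 : ℝ))) := by
  have hs : MeasurableSet[MeasurableSpace.generateFrom {s}] s :=
    MeasurableSpace.measurableSet_generateFrom rfl
  exact Measurable.indicator measurable_const hs

lemma indepFun_of (r : ℕ) (hr : 2 ≤ r) (b : ℕ) (hb : b < r) (i j : ℕ) (hij : i < j) :
    ProbabilityTheory.IndepFun
      ({x | digit r x (i + 1) = (b : ℤ)}.indicator (fun _ => (1 : ℝ)))
      ({x | digit r x (j + 1) = (b : ℤ)}.indicator (fun _ => (1 : ℝ))) unitM := by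
  obtain ⟨d, rfl⟩ := Nat.exists_eq_add_of_lt hij
  have h : ProbabilityTheory.IndepSet {x | digit r x (i + 1) = (b : ℤ)}
      {x | digit r x (i + d + 1 + 1) = (b : ℤ)} unitM := by
    rw [ProbabilityTheory.indepSet_iff_measure_inter_eq_mul (digit_meas_s12 _ _ _) (digit_meas_s12 _ _ _)
      unitM,
      E_indep r hr b hb, E_meas r hr b hb, E_meas r hr b hb]
  rw [ProbabilityTheory.IndepFun_iff_Indep]
  exact ProbabilityTheory.indep_of_indep_of_le_left
    (ProbabilityTheory.indep_of_indep_of_le_right h (ind_meas _).comap_le) (ind_meas _).comap_le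

lemma ae_normal (r : ℕ) (hr : 2 ≤ r) (m b : ℕ) (hb : b < r) :
    ∀ᵐ x ∂unitM, Tendsto (fun n : ℕ => (digitCount r b n ((r : ℝ) ^ m * x) : ℝ) / n) atTop
      (nhds (1 / r)) := by
  let X : ℕ → ℝ → ℝ := fun j =>
    {x | digit r x (m + j + 1) = (b : ℤ)}.indicator (fun _ => (1 : ℝ))
  have hXm : ∀ j, Measurable (X j) := fun j => measurable_const.indicator (digit_meas_s12 _ _ _)
  have hmap : ∀ i, Measure.map (X i) unitM =
      Measure.map ({x | digit r x 1 = (b : ℤ)}.indicator (fun _ => (1 : ℝ))) unitM := by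
    intro i
    have hmp := (shift_mp r hr).iterate (m + i)
    have hc : X i = ({x | digit r x 1 = (b : ℤ)}.indicator (fun _ => (1 : ℝ))) ∘
        (shiftT r)^[m + i] := by
      ext x
      simp only [X, Function.comp, Set.indicator_apply, Set.mem_ofPred_eq, digit_iter]
    rw [hc, ← Measure.map_map (measurable_const.indicator (digit_meas_s12 _ _ _)) hmp.measurable,
      hmp.map_eq]
  have hlaw := ProbabilityTheory.strong_law_ae_real (μ := unitM) X
    ((integrable_const (1 : ℝ)).indicator (digit_meas_s12 _ _ _))
    (by
      intro i j hij
      rcases lt_or_gt_of_ne hij with h | h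
      · exact indepFun_of r hr b hb (m + i) (m + j) (by omega)
      · exact (indepFun_of r hr b hb (m + j) (m + i) (by omega)).symm)
    (fun i => ⟨(hXm i).aemeasurable, (hXm 0).aemeasurable, (hmap i).trans (hmap 0).symm⟩)
  have hE : ∫ x, X 0 x ∂unitM = 1 / r := by
    simp only [X]
    rw [integral_indicator_const _ (digit_meas_s12 _ _ _), Measure.real, E_meas r hr b hb,
      ENNReal.toReal_ofReal (by positivity)]
    simp
  rw [hE] at hlaw
  filter_upwards [hlaw] with x hx
  convert hx using 3 with n
  unfold digitCount
  rw [Finset.card_filter, show Finset.Icc 1 n = Finset.Ico 1 (n + 1) from by ext; simp,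
    Finset.sum_Ico_eq_sum_range]
  push_cast
  refine Finset.sum_congr (by simp) fun j _ => ?_
  simp only [X, Set.indicator_apply, Set.mem_ofPred_eq, digit_mul_pow]
  simp [add_assoc, add_comm, add_left_comm]

/-- The set of numbers `α` in `Set.Ico 0 1` such that `r ^ m * α` fails to be simply
normal in base `r` for at least one `m ≥ 0` is a null set. -/
theorem almost_all_shifts_simply_normal (r : ℕ) (hr : 2 ≤ r) :
    volume {α : ℝ | α ∈ Set.Ico (0 : ℝ) 1 ∧
        ∃ m : ℕ, ¬ SimplyNormal r ((r : ℝ) ^ m * α)} = 0 := by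
  have h : ∀ᵐ x ∂unitM, ∀ m : ℕ, SimplyNormal r ((r : ℝ) ^ m * x) := by
    rw [ae_all_iff]
    intro m
    have : ∀ᵐ x ∂unitM, ∀ b : ℕ, b < r →
        Tendsto (fun n : ℕ => (digitCount r b n ((r : ℝ) ^ m * x) : ℝ) / n) atTop
          (nhds (1 / r)) := by
      rw [ae_all_iff]
      intro b
      by_cases hb : b < r
      · filter_upwards [ae_normal r hr m b hb] with x hx _ using hx
      · exact Eventually.of_forall fun x hb' => absurd hb' hb
    exact this
  rw [unitM, ae_restrict_iff' measurableSet_Ico, ae_iff] at h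
  refine measure_mono_null ?_ h
  rintro x ⟨hx, m, hm⟩ h'
  exact hm (h' hx m)
end

section
/- Let n ≥ 1 and s ≥ 1 be integers, set r = s + 1, and define f_4 as the fourth iterate of the operator g ↦ x·∂g/∂x − y·∂g/∂y applied to f_0(x,y) = (x^s + y)^n. Then at the point x = r^{−1/s}, y = (r−1)/r one has f_4(x,y) = 3(r−1)^2·n^2 + (r^3 − 7r^2 + 12r − 6)·n. -/
open Finset

/-- The operator sending `g` to the function `(x, y) ↦ x * ∂g/∂x - y * ∂g/∂y`. -/
noncomputable def eulerOp (f : ℝ → ℝ → ℝ) : ℝ → ℝ → ℝ :=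
  fun x y => x * deriv (fun t => f t y) x - y * deriv (fun t => f x t) y

/-- `g` is the image of `f` under the Euler operator, with honest derivatives. -/
def IsEul (f g : ℝ → ℝ → ℝ) : Prop :=
  ∀ x y, ∃ a b, HasDerivAt (fun t => f t y) a x ∧ HasDerivAt (fun t => f x t) b y ∧
    x * a - y * b = g x y

lemma IsEul.eq {f g : ℝ → ℝ → ℝ} (h : IsEul f g) : eulerOp f = g := by
  funext x y
  obtain ⟨a, b, ha, hb, e⟩ := h x y
  simp only [eulerOp, ha.deriv, hb.deriv, e]

lemma IsEul.add {f g f' g' : ℝ → ℝ → ℝ} (h : IsEul f g) (h' : IsEul f' g') :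
    IsEul (fun x y => f x y + f' x y) (fun x y => g x y + g' x y) := by
  intro x y
  obtain ⟨a, b, ha, hb, e⟩ := h x y
  obtain ⟨a', b', ha', hb', e'⟩ := h' x y
  exact ⟨_, _, ha.add ha', hb.add hb', by beta_reduce; rw [← e, ← e']; ring⟩

lemma IsEul.mul {f g f' g' : ℝ → ℝ → ℝ} (h : IsEul f g) (h' : IsEul f' g') :
    IsEul (fun x y => f x y * f' x y) (fun x y => g x y * f' x y + f x y * g' x y) := by
  intro x y
  obtain ⟨a, b, ha, hb, e⟩ := h x y
  obtain ⟨a', b', ha', hb', e'⟩ := h' x y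
  exact ⟨_, _, ha.mul ha', hb.mul hb', by beta_reduce; rw [← e, ← e']; ring⟩

lemma IsEul.smul {f g : ℝ → ℝ → ℝ} (c : ℝ) (h : IsEul f g) :
    IsEul (fun x y => c * f x y) (fun x y => c * g x y) := by
  intro x y
  obtain ⟨a, b, ha, hb, e⟩ := h x y
  exact ⟨_, _, ha.const_mul c, hb.const_mul c, by beta_reduce; rw [← e]; ring⟩

lemma IsEul.pow {f g : ℝ → ℝ → ℝ} (m : ℕ) (h : IsEul f g) :
    IsEul (fun x y => f x y ^ m) (fun x y => m * (f x y ^ (m - 1) * g x y)) := by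
  intro x y
  obtain ⟨a, b, ha, hb, e⟩ := h x y
  exact ⟨_, _, ha.pow m, hb.pow m, by beta_reduce; rw [← e]; ring⟩

lemma isEul_lin (s : ℕ) (hs : 1 ≤ s) (c d : ℝ) :
    IsEul (fun x y => c * x ^ s + d * y) (fun x y => c * s * x ^ s + (-d) * y) := by
  intro x y
  refine ⟨_, _, ((hasDerivAt_pow s x).const_mul c).add_const (d * y),
    ((hasDerivAt_id y).const_mul d).const_add (c * x ^ s), ?_⟩
  obtain ⟨k, rfl⟩ : ∃ k, s = k + 1 := ⟨s - 1, by omega⟩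
  simp only [Nat.add_sub_cancel]
  ring

/-- With `r = s + 1`, the fourth iterate of the Euler operator applied to
`(x ^ s + y) ^ n`, evaluated at `x = r ^ (-1/s)` (real rpow) and `y = (r - 1) / r`. -/
theorem eulerOp_four_value (n s : ℕ) (hn : 1 ≤ n) (hs : 1 ≤ s) (r : ℕ) (hr : r = s + 1) :
    (eulerOp^[4] (fun x y => (x ^ s + y) ^ n))
        ((r : ℝ) ^ (-(1 / (s : ℝ)))) (((r : ℝ) - 1) / r) =
      3 * ((r : ℝ) - 1) ^ 2 * n ^ 2 +
        ((r : ℝ) ^ 3 - 7 * (r : ℝ) ^ 2 + 12 * (r : ℝ) - 6) * n := by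
  have u0 := isEul_lin s hs 1 1
  have u1 := isEul_lin s hs (1 * s) (-1)
  have u2 := isEul_lin s hs (1 * s * s) (- -1)
  have u3 := isEul_lin s hs (1 * s * s * s) (- - -1)
  have h1 := u0.pow n
  have h2 := ((u0.pow (n-1)).mul u1).smul (n : ℝ)
  have h3 := (((((u0.pow (n-1-1)).mul u1).smul ((n-1 : ℕ) : ℝ)).mul u1).add
    ((u0.pow (n-1)).mul u2)).smul (n : ℝ)
  have p2 := ((u0.pow (n-1-1)).mul u1).smul ((n-1 : ℕ) : ℝ)
  have p3 := ((((u0.pow (n-1-1-1)).mul u1).smul ((n-1-1 : ℕ) : ℝ)).mul u1).add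
    ((u0.pow (n-1-1)).mul u2)
  have h4 := ((((p3.smul ((n-1 : ℕ) : ℝ)).mul u1).add (p2.mul u2)).add
    ((p2.mul u2).add ((u0.pow (n-1)).mul u3))).smul (n : ℝ)
  have e0 : (fun x y : ℝ => (x ^ s + y) ^ n) = fun x y => (1 * x ^ s + 1 * y) ^ n := by
    simp
  have hx : ((r : ℝ) ^ (-(1 / (s : ℝ)))) ^ s = 1 / r := by
    rw [← Real.rpow_natCast, ← Real.rpow_mul (by positivity)]
    have : (s : ℝ) ≠ 0 := by positivity
    rw [show -(1 / (s : ℝ)) * s = -1 by field_simp, Real.rpow_neg_one, one_div]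
  rw [e0]
  simp only [Function.iterate_succ, Function.iterate_zero, Function.comp, id]
  rw [h1.eq, h2.eq, h3.eq, h4.eq]
  simp only [hx]
  have hr' : (r : ℝ) = s + 1 := by rw [hr]; push_cast; ring
  have hp : (s : ℝ) + 1 ≠ 0 := by positivity
  have a0 : 1 * (1 / (r : ℝ)) + 1 * ((r - 1) / r) = 1 := by rw [hr']; field_simp; ring
  have a1 : 1 * (s : ℝ) * (1 / (r : ℝ)) + -1 * ((r - 1) / r) = 0 := by
    rw [hr']; field_simp; ring
  have a2 : 1 * (s : ℝ) * s * (1 / (r : ℝ)) + - -1 * ((r - 1) / r) = s := by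
    rw [hr']; field_simp; ring
  have a4 : 1 * (s : ℝ) * s * s * s * (1 / (r : ℝ)) + - - - -1 * ((r - 1) / r)
      = s * (s ^ 2 - s + 1) := by
    rw [hr']; field_simp; ring
  simp only [a0, a1, a2, a4]
  simp only [one_pow, mul_zero, zero_mul, add_zero, zero_add, one_mul, mul_one]
  rw [hr', Nat.cast_sub hn]
  push_cast
  ring
end
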